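/- Let 𝒳={1,…,c}, μ a probability measure on 𝒳 with μ_r>0 for every r, and X₁,…,Xₙ i.i.d. μ. Suppose δ_□(W_{Qₙ},W)→0 for some W∈𝒲 and limsup_{n→∞}‖W_{Qₙ}‖_{qΔ}<∞ for some q>1. Then the monochromatic subgraph count N₂(H,Qₙ,X) = n^{−v} Σ_{(i₁,…,i_v)∈S(n,v)} 1{X_{i₁}=X_{i₂}=…=X_{i_v}} Π_{(a,b)∈E(H)} Qₙ(i_a,i_b) satisfies a large deviation principle at speed n with the good rate function I₂(t) = inf{ ∫₀¹ Σ_{r=1}^c f_r(u) log(f_r(u)/μ_r) du : f∈ℱ_c, G_{2,W}(f)=t }. -/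

import Mathlib

open MeasureTheory Filter Set
open scoped ENNReal NNReal

noncomputable section

/-- The uniform probability measure on `[0,1]`. -/
def unif01 : Measure ℝ := volume.restrict (Set.Icc 0 1)

instance : IsProbabilityMeasure unif01 :=
  ⟨by rw [unif01, Measure.restrict_apply_univ, Real.volume_Icc]; norm_num⟩

/-- The `L^r` norm (`r : ℝ≥0∞`) of a kernel, viewed as a function on `[0,1]²`. -/
def kerNorm (W : ℝ → ℝ → ℝ) (r : ℝ≥0∞) : ℝ≥0∞ :=
  eLpNorm (fun z : ℝ × ℝ => W z.1 z.2) r (unif01.prod unif01)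

/-- The (strong) cut distance `d_□` between two kernels on `[0,1]²`. -/
def cutDist (W₁ W₂ : ℝ → ℝ → ℝ) : ℝ :=
  ⨆ S : {S : Set ℝ // MeasurableSet S}, ⨆ T : {T : Set ℝ // MeasurableSet T},
    |∫ x in Set.Icc (0:ℝ) 1 ∩ S.1, ∫ y in Set.Icc (0:ℝ) 1 ∩ T.1, (W₁ x y - W₂ x y)|

/-- A Lebesgue-measure-preserving bijection of `[0,1]`. -/
def MPB (σ : ℝ → ℝ) : Prop :=
  Set.BijOn σ (Set.Icc 0 1) (Set.Icc 0 1) ∧ MeasurePreserving σ unif01 unif01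

/-- The weak cut distance `δ_□`. -/
def weakCutDist (W₁ W₂ : ℝ → ℝ → ℝ) : ℝ :=
  ⨅ σ : {σ : ℝ → ℝ // MPB σ}, cutDist (fun x y => W₁ (σ.1 x) (σ.1 y)) W₂

/-- The step kernel `W_{Q_n}` associated to an `n × n` matrix `Q`:
it equals `Q i j` when `⌈n x⌉ = i, ⌈n y⌉ = j`. -/
def stepKernel (n : ℕ) (Q : Fin n → Fin n → ℝ) : ℝ → ℝ → ℝ := fun x y =>
  ∑ i : Fin n, ∑ j : Fin n,
    if x ∈ Set.Ioc (((i : ℕ) : ℝ)/n) ((((i : ℕ) : ℝ)+1)/n) ∧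
       y ∈ Set.Ioc (((j : ℕ) : ℝ)/n) ((((j : ℕ) : ℝ)+1)/n)
    then Q i j else 0

/-- Product over the edges of `H` (each edge counted once) of `f a b`. -/
def edgeProd {v : ℕ} (G : SimpleGraph (Fin v)) [DecidableRel G.Adj]
    (f : Fin v → Fin v → ℝ) : ℝ :=
  ∏ p ∈ Finset.univ.filter (fun p : Fin v × Fin v => G.Adj p.1 p.2 ∧ p.1 < p.2), f p.1 p.2

/-- The number of edges `|E(H)|`. -/
def edgeCard {v : ℕ} (G : SimpleGraph (Fin v)) [DecidableRel G.Adj] : ℕ :=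
  (Finset.univ.filter (fun p : Fin v × Fin v => G.Adj p.1 p.2 ∧ p.1 < p.2)).card

/-- The inhomogeneous U-statistic `U_n(X)` (sum over distinct indices). -/
def Ustat {X : Type*} {v : ℕ} (G : SimpleGraph (Fin v)) [DecidableRel G.Adj]
    (φ : (Fin v → X) → ℝ) (n : ℕ) (Q : Fin n → Fin n → ℝ) (x : Fin n → X) : ℝ :=
  (∑ i ∈ Finset.univ.filter (fun i : Fin v → Fin n => Function.Injective i),
      φ (x ∘ i) * edgeProd G (fun a b => Q (i a) (i b))) / (n : ℝ) ^ v

/-- The inhomogeneous V-statistic `V_n(X)` (sum over all indices). -/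
def Vstat {X : Type*} {v : ℕ} (G : SimpleGraph (Fin v)) [DecidableRel G.Adj]
    (φ : (Fin v → X) → ℝ) (n : ℕ) (Q : Fin n → Fin n → ℝ) (x : Fin n → X) : ℝ :=
  (∑ i : Fin v → Fin n, φ (x ∘ i) * edgeProd G (fun a b => Q (i a) (i b))) / (n : ℝ) ^ v

open Classical in
/-- Kullback-Leibler divergence `D(ν | ρ) ∈ [0,∞]`. -/
def KLdiv {α : Type*} [MeasurableSpace α] (ν ρ : Measure α) : ℝ≥0∞ :=
  if ν ≪ ρ ∧ Integrable (llr ν ρ) ν then ENNReal.ofReal (∫ a, llr ν ρ a ∂ν) else ⊤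

open Classical in
/-- `ν` itself if it is a probability measure, junk value `0` otherwise. -/
def probOr {α : Type*} [MeasurableSpace α] (ν : Measure α) : Measure α :=
  if IsProbabilityMeasure ν then ν else 0

instance {α : Type*} [MeasurableSpace α] (ν : Measure α) : SigmaFinite (probOr ν) := by
  unfold probOr
  split_ifs with h
  · haveI := h; infer_instance
  · infer_instance

/-- `v`-fold product of a (probability) measure. -/
def piProb {α : Type*} [MeasurableSpace α] (v : ℕ) (ν : Measure α) : Measure (Fin v → α) :=
  Measure.pi fun _ => probOr ν

/-- The functional `T_{W,φ}(ν) = E[φ(B₁,…,B_v) ∏_{(a,b) ∈ E(H)} W(A_a,A_b)]`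
for `(A_a,B_a)` i.i.d. with law `ν`. -/
def TWphi {X : Type*} [MeasurableSpace X] {v : ℕ} (G : SimpleGraph (Fin v))
    [DecidableRel G.Adj] (W : ℝ → ℝ → ℝ) (φ : (Fin v → X) → ℝ)
    (ν : Measure (ℝ × X)) : ℝ :=
  ∫ z : Fin v → ℝ × X,
    φ (fun a => (z a).2) * edgeProd G (fun a b => W (z a).1 (z b).1) ∂(piProb v ν)

/-- Membership in `𝒯ℳ`: probability measures on `[0,1] × 𝒳` whose first marginal
is uniform on `[0,1]`. -/
def inTM {X : Type*} [MeasurableSpace X] (ν : Measure (ℝ × X)) : Prop :=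
  IsProbabilityMeasure ν ∧ ν.map Prod.fst = unif01

/-- The rate function `I₀(t) = inf { D(ν|ρ) : ν ∈ 𝒯ℳ, D(ν|ρ) < ∞, T_{W,φ}(ν) = t }`. -/
def rate0 {X : Type*} [MeasurableSpace X] {v : ℕ} (G : SimpleGraph (Fin v))
    [DecidableRel G.Adj] (W : ℝ → ℝ → ℝ) (φ : (Fin v → X) → ℝ) (μ : Measure X)
    (t : ℝ) : ℝ≥0∞ :=
  ⨅ ν : {ν : Measure (ℝ × X) //
      inTM ν ∧ KLdiv ν (unif01.prod μ) ≠ ⊤ ∧ TWphi G W φ ν = t},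
    KLdiv ν.1 (unif01.prod μ)

/-- Tail assumption (T): `E_μ[e^{λ ψ(X)^p}] < ∞` for all `λ > 0`; for `p = ∞`
it means `ψ` is bounded. -/
def TailCond {X : Type*} [MeasurableSpace X] (μ : Measure X) (ψ : X → ℝ)
    (p : ℝ≥0∞) : Prop :=
  if p = ⊤ then ∃ C : ℝ, ∀ x, ψ x ≤ C
  else ∀ lam : ℝ, 0 < lam →
    ∫⁻ x, ENNReal.ofReal (Real.exp (lam * ψ x ^ p.toReal)) ∂μ < ⊤

/-- A sequence of random elements `T n` defined on probability spaces `(Ω n, P n)`,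
taking values in a topological space `E`, satisfies a large deviation principle at
speed `n` with good rate function `I`. -/
def SatisfiesLDP {E : Type*} [TopologicalSpace E] {Ω : ℕ → Type*}
    [∀ n, MeasurableSpace (Ω n)] (P : ∀ n, Measure (Ω n)) (T : ∀ n, Ω n → E)
    (I : E → ℝ≥0∞) : Prop :=
  (∀ c : ℝ≥0∞, c ≠ ⊤ → IsCompact {x | I x ≤ c}) ∧
  ∀ F : Set E, MeasurableSet[borel E] F →
    (-(⨅ x ∈ interior F, (I x : EReal)) ≤
      Filter.atTop.liminf fun n : ℕ =>
        (((n : ℝ)⁻¹ : ℝ) : EReal) * ENNReal.log (P n {ω | T n ω ∈ F})) ∧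
    (Filter.atTop.limsup (fun n : ℕ =>
        (((n : ℝ)⁻¹ : ℝ) : EReal) * ENNReal.log (P n {ω | T n ω ∈ F})) ≤
      -(⨅ x ∈ closure F, (I x : EReal)))

end
/-- `φ(x₁,…,x_v) = 1{x₁ = … = x_v}` for monochromatic subgraph counts. -/
def monoPhi (c v : ℕ) : (Fin v → Fin c) → ℝ := fun y =>
  if ∀ a b : Fin v, y a = y b then 1 else 0

/-- The class `ℱ_c` of measurable `f = (f₁,…,f_c) : [0,1] → [0,1]^c`
with `Σ_r f_r(x) = 1`. -/
def Fc (c : ℕ) : Set (ℝ → Fin c → ℝ) :=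
  {f | Measurable f ∧ (∀ u ∈ Set.Icc (0 : ℝ) 1, ∀ r, f u r ∈ Set.Icc (0 : ℝ) 1) ∧
    ∀ u ∈ Set.Icc (0 : ℝ) 1, ∑ r, f u r = 1}

/-- `G_{2,W}(f) = Σ_r ∫_{[0,1]^v} ∏_{(a,b) ∈ E(H)} W(x_a,x_b) ∏_a f_r(x_a) dx`. -/
noncomputable def G2 {v : ℕ} (c : ℕ) (G : SimpleGraph (Fin v)) [DecidableRel G.Adj]
    (W : ℝ → ℝ → ℝ) (f : ℝ → Fin c → ℝ) : ℝ :=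
  ∑ r : Fin c,
    ∫ x : Fin v → ℝ, edgeProd G (fun a b => W (x a) (x b)) * ∏ a, f (x a) r
      ∂(Measure.pi fun _ : Fin v => unif01)

/-- The relative entropy `∫₀¹ Σ_r f_r(u) log (f_r(u)/μ_r) du`. -/
noncomputable def entPotts (c : ℕ) (μ : Measure (Fin c)) (f : ℝ → Fin c → ℝ) : ℝ :=
  ∫ u, (∑ r, f u r * Real.log (f u r / (μ {r}).toReal)) ∂unif01

/-- The rate function `I₂` for monochromatic subgraph counts. -/
noncomputable def rate2 {v : ℕ} (c : ℕ) (G : SimpleGraph (Fin v)) [DecidableRel G.Adj]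
    (W : ℝ → ℝ → ℝ) (μ : Measure (Fin c)) (t : ℝ) : ℝ≥0∞ :=
  ⨅ f : {f : ℝ → Fin c → ℝ // f ∈ Fc c ∧ G2 c G W f = t},
    ENNReal.ofReal (entPotts c μ f.1)

/-!
Allow a point of `[0,1]` to carry a random colour: a measurable map into the simplex of colour
distributions. These soft colourings form a compact space for the weak topology given by the
integrals of the colour weights over measurable sets. The monochromatic density of `W` in a soft
colouring is continuous for an `L^Δ` kernel, by Hölder's inequality over the graph (each vertex
lies on at most `Δ` edges). Truncating reduces the counting lemma to bounded kernels, where one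
edge can be exchanged at a time, so kernels bounded in `L^{qΔ}` that are close in cut norm have
close densities, uniformly over all soft colourings. The cut limit `W` inherits the `L^{qΔ}` bound,
and the U-statistic is, up to a vanishing error, the density of `W_{Q_n}` in the block colouring
read off from `X`; so it may be replaced by a continuous function of that colouring.

For the block colouring, the upper bound is Chernoff's inequality for the linear functionals in the
dual formula of the entropy, made uniform by compactness. For the lower bound near a colouring `f`,
change the law of the colours to independent ones whose distributions are the cell averages of `f`:
the variance bound concentrates the block colouring near the averaged `f`, and by Jensen's
inequality the cost is at most `n` times the entropy of `f`. The entropy is lower semicontinuous,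
as a supremum of continuous functionals, so its infimum over fibres is a good rate function.
-/

/-! ### Hölder's inequality over graphs -/

section GraphHolder

theorem lintegral_prod_rpow_inv_le {α κ : Type*} [MeasurableSpace α] {P : Measure α}
    [IsProbabilityMeasure P] (s : Finset κ) {D : ℕ} (hD : D ≠ 0) (hs : s.card ≤ D)
    {f : κ → α → ℝ≥0∞} (hf : ∀ j, Measurable (f j)) :
    ∫⁻ a, ∏ j ∈ s, f j a ^ (D : ℝ)⁻¹ ∂P ≤ ∏ j ∈ s, (∫⁻ a, f j a ∂P) ^ (D : ℝ)⁻¹ := by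
  have hD0 : (0 : ℝ) < D := by positivity
  -- Hölder wants exponents summing to `1`: the constant function `1` absorbs the slack.
  have h := ENNReal.lintegral_prod_norm_pow_le (μ := P) (Finset.insertNone s)
    (f := fun o a => o.elim 1 fun j => f j a)
    (p := fun o => o.elim (1 - s.card * (D : ℝ)⁻¹) fun _ => (D : ℝ)⁻¹)
    (by rintro (_ | j) - <;> simp [(hf _).aemeasurable, aemeasurable_const])
    (by simp [Finset.sum_insertNone])
    (by
      rintro (_ | j) -
      · have : (s.card : ℝ) ≤ D := by exact_mod_cast hs
        simpa [← div_eq_mul_inv, div_le_one hD0] using this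
      · simp)
  simpa [Finset.prod_insertNone] using h

/-- Finner's inequality, in the form obtained by integrating out the coordinates in `s`. -/
theorem lmarginal_prod_rpow_inv_le {ι κ : Type*} [DecidableEq ι] {X : ι → Type*}
    [∀ i, MeasurableSpace (X i)] (μ : ∀ i, Measure (X i)) [∀ i, IsProbabilityMeasure (μ i)]
    (J : Finset κ) {S : κ → Finset ι} {h : κ → (∀ i, X i) → ℝ≥0∞} (hm : ∀ j, Measurable (h j))
    (hdep : ∀ j ∈ J, DependsOn (h j) (S j)) {D : ℕ} (hD : D ≠ 0)
    (hdeg : ∀ i, (J.filter fun j => i ∈ S j).card ≤ D) (s : Finset ι) (x : ∀ i, X i) :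
    (∫⋯∫⁻_s, (fun x => ∏ j ∈ J, h j x ^ (D : ℝ)⁻¹) ∂μ) x ≤
      ∏ j ∈ J, (∫⋯∫⁻_s, h j ∂μ) x ^ (D : ℝ)⁻¹ := by
  induction s using Finset.induction generalizing x with
  | empty => simp
  | insert i s hi ih =>
    have hprod : Measurable fun x => ∏ j ∈ J, h j x ^ (D : ℝ)⁻¹ :=
      Finset.measurable_prod _ fun j _ => (hm j).pow_const _
    have hmarg : ∀ j, Measurable fun t => (∫⋯∫⁻_s, h j ∂μ) (Function.update x i t) :=
      fun j => ((hm j).lmarginal _).comp (measurable_update x)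
    have hfree : ∀ j ∈ J, i ∉ S j → ∀ t,
        (∫⋯∫⁻_s, h j ∂μ) (Function.update x i t) = (∫⋯∫⁻_insert i s, h j ∂μ) x := by
      intro j hj hij
      have hconst : ∀ t, (∫⋯∫⁻_s, h j ∂μ) (Function.update x i t) = (∫⋯∫⁻_s, h j ∂μ) x := by
        intro t
        rw [lmarginal_update_of_notMem (hm j) hi]
        congr 1
        exact funext fun y => hdep j hj fun k hk =>
          Function.update_of_ne (fun hki => hij (by simpa [hki] using hk)) _ _
      simp [lmarginal_insert _ (hm j) hi, hconst]
    calc (∫⋯∫⁻_insert i s, (fun x => ∏ j ∈ J, h j x ^ (D : ℝ)⁻¹) ∂μ) x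
        ≤ ∫⁻ t, ∏ j ∈ J, (∫⋯∫⁻_s, h j ∂μ) (Function.update x i t) ^ (D : ℝ)⁻¹ ∂μ i := by
          rw [lmarginal_insert _ hprod hi]
          exact lintegral_mono fun t => ih _
      _ = (∫⁻ t, ∏ j ∈ J with i ∈ S j, (∫⋯∫⁻_s, h j ∂μ) (Function.update x i t) ^ (D : ℝ)⁻¹ ∂μ i)
            * ∏ j ∈ J with i ∉ S j, (∫⋯∫⁻_insert i s, h j ∂μ) x ^ (D : ℝ)⁻¹ := by
          rw [← lintegral_mul_const _ (Finset.measurable_prod _ fun j _ => (hmarg j).pow_const _)]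
          refine lintegral_congr fun t => ?_
          rw [← Finset.prod_filter_mul_prod_filter_not J (fun j => i ∈ S j)]
          congr 1
          refine Finset.prod_congr rfl fun j hj => ?_
          rw [hfree j (Finset.mem_filter.1 hj).1 (Finset.mem_filter.1 hj).2]
      _ ≤ ∏ j ∈ J, (∫⋯∫⁻_insert i s, h j ∂μ) x ^ (D : ℝ)⁻¹ := by
          rw [← Finset.prod_filter_mul_prod_filter_not J (fun j => i ∈ S j)]
          gcongr
          refine (lintegral_prod_rpow_inv_le _ hD (hdeg i) hmarg).trans_eq ?_
          exact Finset.prod_congr rfl fun j _ => by rw [lmarginal_insert _ (hm j) hi]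

theorem measurePreserving_eval_pair {ι α : Type*} [Fintype ι] [MeasurableSpace α] (ρ : Measure α)
    [IsProbabilityMeasure ρ] {a b : ι} (hab : a ≠ b) :
    MeasurePreserving (fun x : ι → α => (x a, x b)) (Measure.pi fun _ => ρ) (ρ.prod ρ) := by
  refine ⟨by fun_prop, ?_⟩
  have hind := (ProbabilityTheory.iIndepFun_pi (μ := fun _ : ι => ρ) (X := fun _ => id)
    fun _ => aemeasurable_id).indepFun hab
  have hmap : ∀ i, (Measure.pi fun _ : ι => ρ).map (fun x => x i) = ρ :=
    fun i => (measurePreserving_eval (fun _ : ι => ρ) i).map_eq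
  simp only [id_eq] at hind
  rwa [ProbabilityTheory.indepFun_iff_map_prod_eq_prod_map_map
    (measurable_pi_apply a).aemeasurable (measurable_pi_apply b).aemeasurable, hmap, hmap] at hind

variable {v : ℕ} (G : SimpleGraph (Fin v)) [DecidableRel G.Adj]

/-- The edges of `G`, each oriented increasingly: the index set of the product `edgeProd G`. -/
def orderedEdges : Finset (Fin v × Fin v) :=
  Finset.univ.filter fun p => G.Adj p.1 p.2 ∧ p.1 < p.2

theorem edgeProd_eq_prod (f : Fin v → Fin v → ℝ) :
    edgeProd G f = ∏ p ∈ orderedEdges G, f p.1 p.2 := rfl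

variable {G} in
theorem fst_lt_snd_of_mem_orderedEdges {p : Fin v × Fin v} (hp : p ∈ orderedEdges G) :
    p.1 < p.2 := (Finset.mem_filter.1 hp).2.2

variable {G} in
theorem adj_of_mem_orderedEdges {p : Fin v × Fin v} (hp : p ∈ orderedEdges G) :
    G.Adj p.1 p.2 := (Finset.mem_filter.1 hp).2.1

theorem card_incident_orderedEdges_le_degree (i : Fin v) :
    ((orderedEdges G).filter fun p => i ∈ ({p.1, p.2} : Finset (Fin v))).card ≤ G.degree i := by
  rw [← SimpleGraph.card_neighborFinset_eq_degree]
  refine Finset.card_le_card_of_injOn (fun p => if p.1 = i then p.2 else p.1) (fun p hp => ?_) ?_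
  · obtain ⟨hpE, hip⟩ := Finset.mem_filter.1 hp
    have hadj := adj_of_mem_orderedEdges hpE
    rw [Finset.mem_insert, Finset.mem_singleton] at hip
    simp only [Finset.mem_coe, SimpleGraph.mem_neighborFinset]
    split_ifs with h
    · exact h ▸ hadj
    · exact (hip.resolve_left (Ne.symm h)) ▸ hadj.symm
  · rintro ⟨a, b⟩ hp ⟨a', b'⟩ hp'
    simp only [orderedEdges, Finset.coe_filter, mem_ofPred_eq, Finset.mem_filter, Finset.mem_univ,
      Finset.mem_insert, Finset.mem_singleton, true_and] at hp hp' ⊢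
    split_ifs <;> grind

variable {α : Type*} [MeasurableSpace α] {ρ : Measure α} [IsProbabilityMeasure ρ]

theorem measurable_edge {F : α → α → ℝ} (hF : Measurable (Function.uncurry F)) (a b : Fin v) :
    Measurable fun x : Fin v → α => F (x a) (x b) :=
  hF.comp (by fun_prop : Measurable fun x : Fin v → α => (x a, x b))

theorem eLpNorm_edge {F : α → α → ℝ} (hF : Measurable (Function.uncurry F)) {a b : Fin v}
    (hab : a ≠ b) (r : ℝ≥0∞) :
    eLpNorm (fun x : Fin v → α => F (x a) (x b)) r (Measure.pi fun _ => ρ) =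
      eLpNorm (Function.uncurry F) r (ρ.prod ρ) := by
  have hmp := measurePreserving_eval_pair (ι := Fin v) ρ hab
  rw [← eLpNorm_comp_measurePreserving hF.aestronglyMeasurable hmp]
  rfl

/-- Hölder's inequality over a graph of maximum degree `D`: each vertex lies in at most `D`
edges, so an `L^q` bound on the product needs only `L^{qD}` bounds on the factors. -/
theorem eLpNorm_prod_orderedEdges_le {F : Fin v × Fin v → α → α → ℝ}
    (hF : ∀ p, Measurable (Function.uncurry (F p))) {q : ℝ≥0∞} (hq0 : q ≠ 0) (hq : q ≠ ⊤) :
    eLpNorm (fun x : Fin v → α => ∏ p ∈ orderedEdges G, F p (x p.1) (x p.2)) q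
        (Measure.pi fun _ => ρ) ≤
      ∏ p ∈ orderedEdges G, eLpNorm (Function.uncurry (F p)) (q * G.maxDegree) (ρ.prod ρ) := by
  obtain hE | ⟨p₀, hp₀⟩ := (orderedEdges G).eq_empty_or_nonempty
  · simp [hE, eLpNorm_const (1 : ℝ) hq0 (NeZero.ne (Measure.pi fun _ : Fin v => ρ))]
  have hD : G.maxDegree ≠ 0 := by
    have h₀ : 0 < G.degree p₀.1 :=
      (G.degree_pos_iff_exists_adj _).2 ⟨_, adj_of_mem_orderedEdges hp₀⟩
    exact (h₀.trans_le (G.degree_le_maxDegree _)).ne'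
  set D := G.maxDegree
  have hr : 0 < q.toReal := ENNReal.toReal_pos hq0 hq
  have hqD0 : q * D ≠ 0 := by simp [hq0, hD]
  have hqD : q * D ≠ ⊤ := ENNReal.mul_ne_top hq (ENNReal.natCast_ne_top D)
  have : Nonempty α := nonempty_of_isProbabilityMeasure ρ
  have hfinner := lmarginal_prod_rpow_inv_le (fun _ : Fin v => ρ) (orderedEdges G)
    (S := fun p => {p.1, p.2}) (h := fun p x => ‖F p (x p.1) (x p.2)‖ₑ ^ (q * D).toReal)
    (fun p => (measurable_edge (hF p) _ _).enorm.pow_const _)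
    (fun p _ x y hxy => by simp [hxy p.1 (by simp), hxy p.2 (by simp)])
    hD (fun i => (card_incident_orderedEdges_le_degree G i).trans (G.degree_le_maxDegree i))
    Finset.univ (fun _ => Classical.arbitrary α)
  have hedge : ∀ p ∈ orderedEdges G, eLpNorm (Function.uncurry (F p)) (q * D) (ρ.prod ρ) =
      (∫⁻ x, ‖F p (x p.1) (x p.2)‖ₑ ^ (q * D).toReal ∂Measure.pi fun _ : Fin v => ρ) ^
        (1 / (q * D).toReal) := fun p hp => by
    rw [← eLpNorm_edge (hF p) (fst_lt_snd_of_mem_orderedEdges hp).ne,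
      eLpNorm_eq_lintegral_rpow_enorm_toReal hqD0 hqD]
  have hexp : (D : ℝ)⁻¹ * (1 / q.toReal) = 1 / (q * D).toReal := by
    rw [ENNReal.toReal_mul, ENNReal.toReal_natCast, one_div, one_div, mul_inv, mul_comm]
  have hexp' : (q * D).toReal * (D : ℝ)⁻¹ = q.toReal := by
    rw [ENNReal.toReal_mul, ENNReal.toReal_natCast, mul_assoc, mul_inv_cancel₀ (by simpa), mul_one]
  simp only [lmarginal_univ, ← ENNReal.rpow_mul, hexp'] at hfinner
  have henorm : ∀ x : Fin v → α, ‖∏ p ∈ orderedEdges G, F p (x p.1) (x p.2)‖ₑ =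
      ∏ p ∈ orderedEdges G, ‖F p (x p.1) (x p.2)‖ₑ :=
    fun x => by simp only [enorm_eq_nnnorm, nnnorm_prod, ENNReal.ofNNReal_finsetProd]
  rw [eLpNorm_eq_lintegral_rpow_enorm_toReal hq0 hq, Finset.prod_congr rfl hedge]
  simp only [← hexp, ENNReal.rpow_mul, henorm,
    ENNReal.prod_rpow_of_nonneg (one_div_nonneg.2 hr.le)]
  gcongr
  simpa only [ENNReal.prod_rpow_of_nonneg hr.le] using hfinner

end GraphHolder

/-! ### The cut norm -/

section CutNorm

variable {α : Type*} [MeasurableSpace α]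

/-- The cut norm of the signed density `D` on `α × α` is at most `δ`: every rectangle has
signed mass at most `δ`. -/
def CutNormLE (ρ : Measure α) (D : α × α → ℝ) (δ : ℝ) : Prop :=
  ∀ ⦃S T : Set α⦄, MeasurableSet S → MeasurableSet T → |∫ z in S ×ˢ T, D z ∂ρ.prod ρ| ≤ δ

theorem CutNormLE.mono {ρ : Measure α} {D : α × α → ℝ} {δ δ' : ℝ} (h : CutNormLE ρ D δ)
    (hδ : δ ≤ δ') : CutNormLE ρ D δ' := fun _ _ hS hT => (h hS hT).trans hδ

theorem CutNormLE.congr_ae {ρ : Measure α} {D D' : α × α → ℝ} {δ : ℝ} (h : CutNormLE ρ D δ)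
    (hD : D =ᵐ[ρ.prod ρ] D') : CutNormLE ρ D' δ := fun _ _ hS hT => by
  rw [← integral_congr_ae (ae_restrict_of_ae hD)]
  exact h hS hT

theorem abs_integral_mul_le_of_superlevel {P : Measure α} [IsFiniteMeasure P] {F a : α → ℝ}
    (hF : Integrable F P) (ha : Measurable a) {M δ : ℝ} (haM : ∀ x, |a x| ≤ M) (hM : 0 ≤ M)
    (hδ : ∀ t, |∫ x in {x | t < a x}, F x ∂P| ≤ δ) :
    |∫ x, F x * a x ∂P| ≤ 3 * M * δ := by
  -- Layer cake: `a + M` is the integral of the indicators of `{t < a}` over `-M ≤ t < M`.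
  have hlayer : ∀ x, ∫ t in Ico (-M) M, {x | t < a x}.indicator F x = F x * (a x + M) := by
    intro x
    have hset : ∀ t, {x | t < a x}.indicator F x = (Iio (a x)).indicator (fun _ => F x) t :=
      fun t => by simp only [indicator, mem_ofPred_eq, mem_Iio]
    simp_rw [hset]
    rw [setIntegral_indicator measurableSet_Iio, Ico_inter_Iio, min_eq_right (abs_le.1 (haM x)).2,
      setIntegral_const, Real.volume_real_Ico_of_le (abs_le.1 (haM x)).1, smul_eq_mul]
    ring
  have hjoint : Integrable (Function.uncurry fun x t => {x | t < a x}.indicator F x)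
      (P.prod (volume.restrict (Ico (-M) M))) := by
    have hmeas : MeasurableSet {z : α × ℝ | z.2 < a z.1} :=
      measurableSet_lt measurable_snd (ha.comp measurable_fst)
    exact (hF.comp_fst (volume.restrict (Ico (-M) M))).indicator hmeas
  have hshift : |∫ x, F x * (a x + M) ∂P| ≤ 2 * M * δ := by
    simp_rw [← hlayer]
    rw [integral_integral_swap hjoint, ← Real.norm_eq_abs]
    refine (norm_setIntegral_le_of_norm_le_const (C := δ) (by simp) fun t _ => ?_).trans_eq ?_
    · rw [integral_indicator (measurableSet_lt measurable_const ha)]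
      exact hδ t
    · rw [Real.volume_real_Ico_of_le (by linarith)]
      ring
  have hmass : |∫ x, F x ∂P| ≤ δ := by
    have huniv : {x | -M - 1 < a x} = univ :=
      eq_univ_of_forall fun x => show -M - 1 < a x by linarith [(abs_le.1 (haM x)).1]
    simpa [huniv] using hδ (-M - 1)
  have hFa : Integrable (fun x => F x * (a x + M)) P :=
    hF.mul_bdd (c := 2 * M) (ha.add_const M).aestronglyMeasurable (ae_of_all _ fun x => by
      obtain ⟨hl, hu⟩ := abs_le.1 (haM x)
      rw [Real.norm_of_nonneg] <;> linarith)
  calc |∫ x, F x * a x ∂P| = |∫ x, F x * (a x + M) ∂P - M * ∫ x, F x ∂P| := by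
        rw [← integral_const_mul, ← integral_sub hFa (hF.const_mul M)]
        congr 2 with x; ring
    _ ≤ |∫ x, F x * (a x + M) ∂P| + M * |∫ x, F x ∂P| := by
        refine (abs_sub _ _).trans_eq ?_
        rw [abs_mul, abs_of_nonneg hM]
    _ ≤ 3 * M * δ := by nlinarith

theorem CutNormLE.abs_integral_mul_mul_le {ρ : Measure α} [IsFiniteMeasure ρ] {D : α × α → ℝ}
    {δ : ℝ} (hcut : CutNormLE ρ D δ) (hD : Integrable D (ρ.prod ρ)) {a b : α → ℝ}
    (ha : Measurable a) (hb : Measurable b) {M N : ℝ} (hM : 0 ≤ M) (hN : 0 ≤ N)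
    (haM : ∀ x, |a x| ≤ M) (hbN : ∀ x, |b x| ≤ N) :
    |∫ z, D z * (a z.1 * b z.2) ∂ρ.prod ρ| ≤ 9 * (M * N) * δ := by
  have hDb : Integrable (fun z => D z * b z.2) (ρ.prod ρ) :=
    hD.mul_bdd (hb.comp measurable_snd).aestronglyMeasurable (ae_of_all _ fun z => hbN z.2)
  have hrect : ∀ S, MeasurableSet S →
      |∫ z in Prod.fst ⁻¹' S, D z * b z.2 ∂ρ.prod ρ| ≤ 3 * N * δ := by
    intro S hS
    refine abs_integral_mul_le_of_superlevel hD.restrict (hb.comp measurable_snd)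
      (fun z => hbN z.2) hN fun t => ?_
    rw [Measure.restrict_restrict (measurableSet_lt measurable_const (hb.comp measurable_snd))]
    have hinter : {z : α × α | t < b z.2} ∩ Prod.fst ⁻¹' S = S ×ˢ {y | t < b y} := by
      ext z; exact and_comm
    exact hinter ▸ hcut hS (measurableSet_lt measurable_const hb)
  have h := abs_integral_mul_le_of_superlevel hDb (ha.comp measurable_fst) (fun z => haM z.1) hM
    fun t => hrect _ (measurableSet_lt measurable_const ha)
  simp only [Function.comp_apply] at h
  calc |∫ z, D z * (a z.1 * b z.2) ∂ρ.prod ρ| = |∫ z, D z * b z.2 * a z.1 ∂ρ.prod ρ| := by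
        congr 2 with z; ring
    _ ≤ 9 * (M * N) * δ := by linarith

theorem cutNormLE_cutDist {U W : ℝ → ℝ → ℝ}
    (hI : Integrable (fun z : ℝ × ℝ => U z.1 z.2 - W z.1 z.2) (unif01.prod unif01)) :
    CutNormLE unif01 (fun z => U z.1 z.2 - W z.1 z.2) (cutDist U W) := by
  set D : ℝ × ℝ → ℝ := fun z => U z.1 z.2 - W z.1 z.2
  have hrect : ∀ S T : {S : Set ℝ // MeasurableSet S},
      ∫ x in Icc (0 : ℝ) 1 ∩ S.1, ∫ y in Icc (0 : ℝ) 1 ∩ T.1, (U x y - W x y) =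
        ∫ z in S.1 ×ˢ T.1, D z ∂unif01.prod unif01 := by
    intro S T
    rw [setIntegral_prod _ hI.integrableOn, unif01, Measure.restrict_restrict S.2,
      Measure.restrict_restrict T.2, inter_comm S.1, inter_comm T.1]
  have hbound : ∀ S T : {S : Set ℝ // MeasurableSet S},
      |∫ z in S.1 ×ˢ T.1, D z ∂unif01.prod unif01| ≤ ∫ z, ‖D z‖ ∂unif01.prod unif01 := fun S T =>
    (norm_integral_le_integral_norm _).trans
      (setIntegral_le_integral hI.norm (ae_of_all _ fun _ => norm_nonneg _))
  have : Nonempty {S : Set ℝ // MeasurableSet S} := ⟨⟨∅, MeasurableSet.empty⟩⟩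
  intro S T hS hT
  simp only [cutDist, hrect]
  exact le_ciSup_of_le ⟨_, forall_mem_range.2 fun S => ciSup_le (hbound S)⟩ ⟨S, hS⟩
    (le_ciSup_of_le ⟨_, forall_mem_range.2 (hbound _)⟩ ⟨T, hT⟩ le_rfl)

variable {v : ℕ} {ρ : Measure α} [IsProbabilityMeasure ρ]

theorem measurePreserving_update_prod (a : Fin v) :
    MeasurePreserving (fun z : (Fin v → α) × α => Function.update z.1 a z.2)
      ((Measure.pi fun _ => ρ).prod ρ) (Measure.pi fun _ => ρ) := by
  obtain ⟨n, rfl⟩ : ∃ n, v = n + 1 := ⟨v - 1, by have := a.pos; omega⟩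
  have he := measurePreserving_piFinSuccAbove (fun _ : Fin (n + 1) => ρ) a
  have hswap := ((MeasurePreserving.id ρ).prod (measurePreserving_snd.comp he)).comp
    (Measure.measurePreserving_swap (μ := Measure.pi fun _ : Fin (n + 1) => ρ) (ν := ρ))
  convert he.symm.comp hswap using 1
  ext1 z
  exact (Fin.insertNth_removeNth a z.2 z.1).symm

theorem integral_eq_integral_update (a : Fin v) {f : (Fin v → α) → ℝ}
    (hf : Integrable f (Measure.pi fun _ => ρ)) :
    ∫ x, f x ∂Measure.pi (fun _ => ρ) =
      ∫ x, ∫ t, f (Function.update x a t) ∂ρ ∂Measure.pi fun _ => ρ := by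
  have hmp := measurePreserving_update_prod (ρ := ρ) a
  rw [← integral_prod (fun z : (Fin v → α) × α => f (Function.update z.1 a z.2))
    (hmp.integrable_comp_of_integrable hf)]
  conv_lhs => rw [← hmp.map_eq]
  exact integral_map hmp.aemeasurable (by rw [hmp.map_eq]; exact hf.aestronglyMeasurable)

/-- Resampling the coordinates `a` and `b` turns `A` into a function of `x a` and `B` into a
function of `x b`. -/
theorem CutNormLE.abs_integral_edge_le {D : α × α → ℝ} {δ : ℝ} (hcut : CutNormLE ρ D δ)
    (hD : Integrable D (ρ.prod ρ)) {a b : Fin v} (hab : a ≠ b)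
    {A B : (Fin v → α) → ℝ} (hA : Measurable A) (hB : Measurable B) (hAb : DependsOn A {b}ᶜ)
    (hBa : DependsOn B {a}ᶜ) {M N : ℝ} (hM : 0 ≤ M) (hN : 0 ≤ N) (hAM : ∀ x, |A x| ≤ M)
    (hBN : ∀ x, |B x| ≤ N) :
    |∫ x, D (x a, x b) * (A x * B x) ∂Measure.pi fun _ => ρ| ≤ 9 * (M * N) * δ := by
  have hf : Integrable (fun x : Fin v → α => D (x a, x b) * (A x * B x))
      (Measure.pi fun _ => ρ) := by
    have hDab := (measurePreserving_eval_pair (ι := Fin v) ρ hab).integrable_comp_of_integrable hD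
    refine hDab.mul_bdd (c := M * N) (hA.mul hB).aestronglyMeasurable (ae_of_all _ fun x => ?_)
    rw [norm_mul]
    exact mul_le_mul (hAM x) (hBN x) (norm_nonneg _) hM
  have hf' :=
    ((measurePreserving_update_prod b).integrable_comp_of_integrable hf).integral_prod_left
  simp only [Function.comp_apply] at hf'
  have hsplit : ∀ (x : Fin v → α) (s t : α),
      A (Function.update (Function.update x a s) b t) *
          B (Function.update (Function.update x a s) b t) =
        A (Function.update x a s) * B (Function.update x b t) := by
    intro x s t
    congr 1
    · exact hAb fun i hi => Function.update_of_ne hi _ _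
    · rw [Function.update_comm hab]
      exact hBa fun i hi => Function.update_of_ne hi _ _
  rw [integral_eq_integral_update b hf, integral_eq_integral_update a hf']
  have hinner : ∀ x : Fin v → α, ‖∫ s, ∫ t, D (s, t) *
      (A (Function.update x a s) * B (Function.update x b t)) ∂ρ ∂ρ‖ ≤ 9 * (M * N) * δ := by
    intro x
    have hAx : Measurable fun s => A (Function.update x a s) := hA.comp (measurable_update x)
    have hBx : Measurable fun t => B (Function.update x b t) := hB.comp (measurable_update x)
    have hint : Integrable (fun z : α × α => D z *
        (A (Function.update x a z.1) * B (Function.update x b z.2))) (ρ.prod ρ) :=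
      hD.mul_bdd (c := M * N)
        ((hAx.comp measurable_fst).mul (hBx.comp measurable_snd)).aestronglyMeasurable
        (ae_of_all _ fun z => by
          rw [norm_mul]
          exact mul_le_mul (hAM _) (hBN _) (norm_nonneg _) hM)
    rw [← integral_prod _ hint]
    exact hcut.abs_integral_mul_mul_le hD hAx hBx hM hN (fun s => hAM _) fun t => hBN _
  simpa [Function.update_of_ne hab, hsplit] using
    norm_integral_le_of_norm_le_const (μ := Measure.pi fun _ : Fin v => ρ) (ae_of_all _ hinner)

end CutNorm

/-! ### The counting lemma -/

section Counting

theorem dist_piecewise_le_card_mul {κ V E : Type*} [DecidableEq κ] [PseudoMetricSpace E]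
    {Φ : (κ → V) → E} {A B : κ → V} {η : ℝ} {s : Finset κ}
    (h : ∀ F : κ → V, (∀ k, F k = A k ∨ F k = B k) → ∀ j ∈ s,
      dist (Φ (Function.update F j (A j))) (Φ (Function.update F j (B j))) ≤ η) :
    dist (Φ (s.piecewise A B)) (Φ B) ≤ s.card * η := by
  induction s using Finset.induction with
  | empty => simp
  | insert j s hj ih =>
    have hB : Function.update (s.piecewise A B) j (B j) = s.piecewise A B := by
      rw [← s.piecewise_eq_of_notMem A B hj, Function.update_eq_self]
    have hstep := h (s.piecewise A B) (fun k => by by_cases hk : k ∈ s <;> simp [hk]) j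
      (Finset.mem_insert_self j s)
    rw [hB, ← Finset.piecewise_insert] at hstep
    calc dist (Φ ((insert j s).piecewise A B)) (Φ B)
        ≤ dist (Φ ((insert j s).piecewise A B)) (Φ (s.piecewise A B)) +
            dist (Φ (s.piecewise A B)) (Φ B) := dist_triangle _ _ _
      _ ≤ η + s.card * η :=
          add_le_add hstep (ih fun F hF k hk => h F hF k (Finset.mem_insert_of_mem hk))
      _ = (insert j s).card * η := by
          rw [Finset.card_insert_of_notMem hj]; push_cast; ring

/-- Truncation of a real number to `[-M, M]`. -/
noncomputable def clip (M t : ℝ) : ℝ := max (-M) (min M t)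

theorem measurable_clip (M : ℝ) : Measurable (clip M) :=
  measurable_const.max (measurable_const.min measurable_id)

theorem abs_clip_le {M : ℝ} (hM : 0 ≤ M) (t : ℝ) : |clip M t| ≤ M :=
  abs_le.2 ⟨le_max_left _ _, max_le (by linarith) (min_le_left _ _)⟩

theorem abs_clip_le_abs {M : ℝ} (hM : 0 ≤ M) (t : ℝ) : |clip M t| ≤ |t| := by
  unfold clip
  grind

theorem abs_sub_clip_le {M : ℝ} (hM : 0 < M) {q : ℝ} (hq : 1 ≤ q) (t : ℝ) :
    |t - clip M t| ≤ M ^ (1 - q) * |t| ^ q := by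
  obtain ht | ht := le_or_gt |t| M
  · have hclip : clip M t = t := by unfold clip; grind
    rw [hclip, sub_self, abs_zero]
    positivity
  · have ht0 : 0 < |t| := hM.trans ht
    calc |t - clip M t| ≤ |t| := by unfold clip; grind
      _ = |t| ^ (1 - q) * |t| ^ q := by rw [← Real.rpow_add ht0]; simp
      _ ≤ M ^ (1 - q) * |t| ^ q := by
          gcongr 1
          exact Real.rpow_le_rpow_of_nonpos hM ht.le (by linarith)

theorem eLpNorm_sub_clip_le {β : Type*} [MeasurableSpace β] {μ : Measure β} (f : β → ℝ) {M : ℝ}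
    (hM : 0 < M) {q : ℝ} (hq : 1 ≤ q) (r : ℝ≥0∞) :
    eLpNorm (fun z => f z - clip M (f z)) r μ ≤
      ENNReal.ofReal (M ^ (1 - q)) * eLpNorm f (ENNReal.ofReal q * r) μ ^ q := by
  calc eLpNorm (fun z => f z - clip M (f z)) r μ
      ≤ eLpNorm (M ^ (1 - q) • fun z => ‖f z‖ ^ q) r μ := by
        refine eLpNorm_mono fun z => (abs_sub_clip_le hM hq (f z)).trans_eq ?_
        rw [Pi.smul_apply, smul_eq_mul, Real.norm_of_nonneg (by positivity), Real.norm_eq_abs]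
    _ = ENNReal.ofReal (M ^ (1 - q)) * eLpNorm f (ENNReal.ofReal q * r) μ ^ q := by
        rw [eLpNorm_const_smul, eLpNorm_norm_rpow f (by linarith), mul_comm r,
          Real.enorm_of_nonneg (by positivity)]

variable {α : Type*} [MeasurableSpace α] {v : ℕ} (G : SimpleGraph (Fin v)) [DecidableRel G.Adj]

/-- The integral of a product of kernels `F p`, one for each edge `p` of `G`, against the weight
`w`. Letting the kernel depend on the edge allows one to exchange kernels edge by edge. -/
noncomputable def edgeIntegral (ρ : Measure α) (F : Fin v × Fin v → α → α → ℝ)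
    (w : (Fin v → α) → ℝ) : ℝ :=
  ∫ x, (∏ p ∈ orderedEdges G, F p (x p.1) (x p.2)) * w x ∂Measure.pi fun _ => ρ

variable {ρ : Measure α} [IsProbabilityMeasure ρ] {G} {F : Fin v × Fin v → α → α → ℝ}
  {w : (Fin v → α) → ℝ}

theorem measurable_prod_orderedEdges (hF : ∀ p, Measurable (Function.uncurry (F p))) :
    Measurable fun x : Fin v → α => ∏ p ∈ orderedEdges G, F p (x p.1) (x p.2) :=
  Finset.measurable_prod _ fun p _ => measurable_edge (hF p) _ _

theorem integrable_prod_orderedEdges (hF : ∀ p, Measurable (Function.uncurry (F p)))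
    (hFD : ∀ p, eLpNorm (Function.uncurry (F p)) G.maxDegree (ρ.prod ρ) ≠ ⊤) :
    Integrable (fun x : Fin v → α => ∏ p ∈ orderedEdges G, F p (x p.1) (x p.2))
      (Measure.pi fun _ => ρ) := by
  refine memLp_one_iff_integrable.1 ⟨(measurable_prod_orderedEdges hF).aestronglyMeasurable, ?_⟩
  refine (eLpNorm_prod_orderedEdges_le G hF one_ne_zero ENNReal.one_ne_top).trans_lt ?_
  simpa only [one_mul] using ENNReal.prod_lt_top fun p _ => (hFD p).lt_top

theorem integrable_prod_orderedEdges_mul (hF : ∀ p, Measurable (Function.uncurry (F p)))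
    (hFD : ∀ p, eLpNorm (Function.uncurry (F p)) G.maxDegree (ρ.prod ρ) ≠ ⊤)
    (hw : Measurable w) (hw1 : ∀ x, |w x| ≤ 1) :
    Integrable (fun x : Fin v → α => (∏ p ∈ orderedEdges G, F p (x p.1) (x p.2)) * w x)
      (Measure.pi fun _ => ρ) :=
  (integrable_prod_orderedEdges hF hFD).mul_bdd hw.aestronglyMeasurable (ae_of_all _ hw1)

theorem enorm_edgeIntegral_le (hF : ∀ p, Measurable (Function.uncurry (F p)))
    (hw1 : ∀ x, |w x| ≤ 1) :
    ‖edgeIntegral G ρ F w‖ₑ ≤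
      ∏ p ∈ orderedEdges G, eLpNorm (Function.uncurry (F p)) G.maxDegree (ρ.prod ρ) := by
  calc ‖edgeIntegral G ρ F w‖ₑ
      ≤ ∫⁻ x, ‖(∏ p ∈ orderedEdges G, F p (x p.1) (x p.2)) * w x‖ₑ ∂Measure.pi fun _ => ρ :=
        enorm_integral_le_lintegral_enorm _
    _ ≤ ∫⁻ x, ‖∏ p ∈ orderedEdges G, F p (x p.1) (x p.2)‖ₑ ∂Measure.pi fun _ => ρ := by
        refine lintegral_mono fun x => enorm_le_iff_norm_le.2 ?_
        rw [norm_mul]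
        exact mul_le_of_le_one_right (norm_nonneg _) (hw1 x)
    _ ≤ _ := by
        rw [← eLpNorm_one_eq_lintegral_enorm]
        simpa only [one_mul] using
          eLpNorm_prod_orderedEdges_le (ρ := ρ) G hF one_ne_zero ENNReal.one_ne_top

theorem edgeIntegral_update_sub_update (hF : ∀ p, Measurable (Function.uncurry (F p)))
    (hFD : ∀ p, eLpNorm (Function.uncurry (F p)) G.maxDegree (ρ.prod ρ) ≠ ⊤)
    (hw : Measurable w) (hw1 : ∀ x, |w x| ≤ 1) {j : Fin v × Fin v} (hj : j ∈ orderedEdges G)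
    {K L : α → α → ℝ} (hK : Measurable (Function.uncurry K)) (hL : Measurable (Function.uncurry L))
    (hKD : eLpNorm (Function.uncurry K) G.maxDegree (ρ.prod ρ) ≠ ⊤)
    (hLD : eLpNorm (Function.uncurry L) G.maxDegree (ρ.prod ρ) ≠ ⊤) :
    edgeIntegral G ρ (Function.update F j K) w - edgeIntegral G ρ (Function.update F j L) w =
      edgeIntegral G ρ (Function.update F j fun x y => K x y - L x y) w := by
  have hint : ∀ {R : α → α → ℝ}, Measurable (Function.uncurry R) →
      eLpNorm (Function.uncurry R) G.maxDegree (ρ.prod ρ) ≠ ⊤ →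
      Integrable (fun x : Fin v → α => (∏ p ∈ orderedEdges G,
        Function.update F j R p (x p.1) (x p.2)) * w x) (Measure.pi fun _ => ρ) := by
    intro R hR hRD
    refine integrable_prod_orderedEdges_mul (fun p => ?_) (fun p => ?_) hw hw1 <;>
      obtain rfl | hp := eq_or_ne p j <;> simp [*]
  have hupdate : ∀ (R : α → α → ℝ) (x : Fin v → α),
      ∏ p ∈ orderedEdges G, Function.update F j R p (x p.1) (x p.2) =
        R (x j.1) (x j.2) * ∏ p ∈ (orderedEdges G).erase j, F p (x p.1) (x p.2) := by
    intro R x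
    rw [← Finset.mul_prod_erase _ _ hj, Function.update_self]
    congr 1
    exact Finset.prod_congr rfl fun p hp => by
      rw [Function.update_of_ne (Finset.ne_of_mem_erase hp)]
  unfold edgeIntegral
  rw [← integral_sub (hint hK hKD) (hint hL hLD)]
  congr 1 with x
  simp only [hupdate]
  ring

theorem dependsOn_prod_edges {α : Type*} {F : Fin v × Fin v → α → α → ℝ}
    {s : Finset (Fin v × Fin v)} {a : Fin v}
    (hs : ∀ p ∈ s, a ≠ p.1 ∧ a ≠ p.2) :
    DependsOn (fun x : Fin v → α => ∏ p ∈ s, F p (x p.1) (x p.2)) {a}ᶜ := fun x y hxy =>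
  Finset.prod_congr rfl fun p hp => by rw [hxy _ (hs p hp).1.symm, hxy _ (hs p hp).2.symm]

theorem abs_prod_mul_prod_le {α : Type*} {F : Fin v × Fin v → α → α → ℝ}
    {s : Finset (Fin v × Fin v)} {M : ℝ}
    (hFM : ∀ p ∈ s, ∀ x y, |F p x y| ≤ M) {g : α → ℝ} (hg1 : ∀ x, |g x| ≤ 1) (t : Finset (Fin v))
    (x : Fin v → α) : |(∏ p ∈ s, F p (x p.1) (x p.2)) * ∏ i ∈ t, g (x i)| ≤ M ^ s.card := by
  rw [abs_mul, Finset.abs_prod, Finset.abs_prod]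
  refine (mul_le_of_le_one_right (Finset.prod_nonneg fun _ _ => abs_nonneg _)
    (Finset.prod_le_one (fun _ _ => abs_nonneg _) fun i _ => hg1 _)).trans ?_
  exact (Finset.prod_le_prod (fun _ _ => abs_nonneg _) fun p hp => hFM p hp _ _).trans_eq
    (Finset.prod_const M)

theorem measurable_prod_apply {ι : Type*} [Fintype ι] {g : α → ℝ} (hg : Measurable g) :
    Measurable fun x : ι → α => ∏ a, g (x a) :=
  Finset.measurable_prod _ fun a _ => hg.comp (measurable_pi_apply a)

theorem abs_prod_apply_le_one {ι α : Type*} [Fintype ι] {g : α → ℝ} (hg1 : ∀ x, |g x| ≤ 1)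
    (x : ι → α) : |∏ a, g (x a)| ≤ 1 := by
  rw [Finset.abs_prod]
  exact Finset.prod_le_one (fun _ _ => abs_nonneg _) fun a _ => hg1 _

/-- The edges at the endpoint `b` do not reach the endpoint `a`, as no other edge joins `a` to `b`,
so the cofactor of `F (a, b)` splits as `CutNormLE.abs_integral_edge_le` requires. -/
theorem abs_edgeIntegral_le_of_bounded (hF : ∀ p, Measurable (Function.uncurry (F p)))
    {j : Fin v × Fin v} (hj : j ∈ orderedEdges G) {δ : ℝ}
    (hcut : CutNormLE ρ (Function.uncurry (F j)) δ)
    (hFj : Integrable (Function.uncurry (F j)) (ρ.prod ρ)) {M : ℝ} (hM : 1 ≤ M)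
    (hFM : ∀ p ≠ j, ∀ x y, |F p x y| ≤ M) {g : α → ℝ} (hg : Measurable g)
    (hg1 : ∀ x, |g x| ≤ 1) :
    |edgeIntegral G ρ F fun x => ∏ a, g (x a)| ≤
      9 * (M ^ (orderedEdges G).card * M ^ (orderedEdges G).card) * δ := by
  obtain ⟨a, b⟩ := j
  have hab : a < b := fst_lt_snd_of_mem_orderedEdges hj
  set E := (orderedEdges G).erase (a, b)
  set Eb := E.filter fun p => b = p.1 ∨ b = p.2
  set Ea := E.filter fun p => ¬(b = p.1 ∨ b = p.2)
  have hfactor : ∀ x : Fin v → α, (∏ p ∈ orderedEdges G, F p (x p.1) (x p.2)) * ∏ i, g (x i) =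
      Function.uncurry (F (a, b)) (x a, x b) *
        (((∏ p ∈ Ea, F p (x p.1) (x p.2)) * ∏ i ∈ Finset.univ.erase b, g (x i)) *
          ((∏ p ∈ Eb, F p (x p.1) (x p.2)) * ∏ i ∈ {b}, g (x i))) := by
    intro x
    rw [← Finset.mul_prod_erase _ _ hj, ← Finset.mul_prod_erase _ _ (Finset.mem_univ b),
      ← Finset.prod_filter_mul_prod_filter_not E (fun p => b = p.1 ∨ b = p.2),
      Finset.prod_singleton, Function.uncurry_apply_pair]
    ring
  have hmeas : ∀ s t, Measurable fun x : Fin v → α =>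
      (∏ p ∈ s, F p (x p.1) (x p.2)) * ∏ i ∈ t, g (x i) := fun s t =>
    (Finset.measurable_prod _ fun p _ => measurable_edge (hF p) _ _).mul
      (Finset.measurable_prod _ fun i _ => hg.comp (measurable_pi_apply i))
  have hbound : ∀ s ⊆ E, ∀ t (x : Fin v → α),
      |(∏ p ∈ s, F p (x p.1) (x p.2)) * ∏ i ∈ t, g (x i)| ≤ M ^ (orderedEdges G).card :=
    fun s hs t x => (abs_prod_mul_prod_le (fun p hp => hFM p (Finset.ne_of_mem_erase (hs hp)))
      hg1 t x).trans
        (pow_le_pow_right₀ hM (Finset.card_le_card (hs.trans (Finset.erase_subset _ _))))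
  have hEa : ∀ p ∈ Ea, b ≠ p.1 ∧ b ≠ p.2 := fun p hp => not_or.1 (Finset.mem_filter.1 hp).2
  have hEb : ∀ p ∈ Eb, a ≠ p.1 ∧ a ≠ p.2 := by
    intro p hp
    obtain ⟨hpE, hbp⟩ := Finset.mem_filter.1 hp
    have hlt := fst_lt_snd_of_mem_orderedEdges (Finset.mem_of_mem_erase hpE)
    have hne := Finset.ne_of_mem_erase hpE
    grind
  have hM0 : 0 ≤ M ^ (orderedEdges G).card := by positivity
  simp_rw [edgeIntegral, hfactor]
  refine hcut.abs_integral_edge_le hFj hab.ne (hmeas _ _) (hmeas _ _) (fun x y hxy => ?_)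
    (fun x y hxy => ?_) hM0 hM0 (hbound _ (Finset.filter_subset _ _) _)
    (hbound _ (Finset.filter_subset _ _) _)
  · exact congrArg₂ _ (dependsOn_prod_edges hEa hxy)
      (Finset.prod_congr rfl fun i hi => by rw [hxy i (Finset.ne_of_mem_erase hi)])
  · exact congrArg₂ _ (dependsOn_prod_edges hEb hxy)
      (Finset.prod_congr rfl fun i hi => by
        rw [hxy i (by rw [Finset.mem_singleton.1 hi]; exact hab.ne')])

theorem edgeIntegral_piecewise_orderedEdges {ρ : Measure α} (A B : Fin v × Fin v → α → α → ℝ) :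
    edgeIntegral G ρ ((orderedEdges G).piecewise A B) w = edgeIntegral G ρ A w := by
  unfold edgeIntegral
  congr 1 with x
  congr 1
  exact Finset.prod_congr rfl fun p hp => by rw [Finset.piecewise_eq_of_mem _ _ _ hp]

theorem abs_edgeIntegral_update_le {C : ℝ≥0} (hF : ∀ p, Measurable (Function.uncurry (F p)))
    (hFD : ∀ p, eLpNorm (Function.uncurry (F p)) G.maxDegree (ρ.prod ρ) ≤ C)
    (hw1 : ∀ x, |w x| ≤ 1) {j : Fin v × Fin v} (hj : j ∈ orderedEdges G) {K : α → α → ℝ}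
    (hK : Measurable (Function.uncurry K)) {τ : ℝ≥0}
    (hKτ : eLpNorm (Function.uncurry K) G.maxDegree (ρ.prod ρ) ≤ τ) :
    |edgeIntegral G ρ (Function.update F j K) w| ≤ C ^ ((orderedEdges G).card - 1) * τ := by
  have hm : ∀ p, Measurable (Function.uncurry (Function.update F j K p)) := by
    intro p
    obtain rfl | hp := eq_or_ne p j <;> simp [*]
  have h : ‖edgeIntegral G ρ (Function.update F j K) w‖ₑ ≤
      ((C ^ ((orderedEdges G).card - 1) * τ : ℝ≥0) : ℝ≥0∞) := by
    refine (enorm_edgeIntegral_le hm hw1).trans ?_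
    rw [← Finset.mul_prod_erase _ _ hj, Function.update_self, ← Finset.card_erase_of_mem hj,
      mul_comm]
    push_cast
    refine mul_le_mul' (Finset.prod_le_pow_card _ _ _ fun p hp => ?_) hKτ
    rw [Function.update_of_ne (Finset.ne_of_mem_erase hp)]
    exact hFD p
  rw [enorm_le_coe] at h
  exact_mod_cast h

theorem abs_edgeIntegral_sub_le {C : ℝ≥0} {A B : Fin v × Fin v → α → α → ℝ}
    (hA : ∀ p, Measurable (Function.uncurry (A p))) (hB : ∀ p, Measurable (Function.uncurry (B p)))
    (hAD : ∀ p, eLpNorm (Function.uncurry (A p)) G.maxDegree (ρ.prod ρ) ≤ C)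
    (hBD : ∀ p, eLpNorm (Function.uncurry (B p)) G.maxDegree (ρ.prod ρ) ≤ C)
    (hw : Measurable w) (hw1 : ∀ x, |w x| ≤ 1) {τ : ℝ≥0}
    (hAB : ∀ p, eLpNorm (Function.uncurry fun x y => A p x y - B p x y) G.maxDegree
      (ρ.prod ρ) ≤ τ) :
    |edgeIntegral G ρ A w - edgeIntegral G ρ B w| ≤
      (orderedEdges G).card * (C ^ ((orderedEdges G).card - 1) * τ) := by
  rw [← edgeIntegral_piecewise_orderedEdges A B]
  refine dist_piecewise_le_card_mul (Φ := fun F => edgeIntegral G ρ F w) fun F hF j hj => ?_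
  have hFm : ∀ p, Measurable (Function.uncurry (F p)) := fun p => by
    obtain h | h := hF p <;> simp [h, hA, hB]
  have hFC : ∀ p, eLpNorm (Function.uncurry (F p)) G.maxDegree (ρ.prod ρ) ≤ C := fun p => by
    obtain h | h := hF p <;> simp [h, hAD, hBD]
  have hne : ∀ {K : α → α → ℝ}, eLpNorm (Function.uncurry K) G.maxDegree (ρ.prod ρ) ≤ C →
      eLpNorm (Function.uncurry K) G.maxDegree (ρ.prod ρ) ≠ ⊤ :=
    fun h => ne_top_of_le_ne_top ENNReal.coe_ne_top h
  rw [Real.dist_eq, edgeIntegral_update_sub_update hFm (fun p => hne (hFC p)) hw hw1 hj (hA j)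
    (hB j) (hne (hAD j)) (hne (hBD j))]
  exact abs_edgeIntegral_update_le hFm hFC hw1 hj (K := fun x y => A j x y - B j x y)
    ((hA j).sub (hB j)) (hAB j)

theorem one_le_maxDegree_of_mem_orderedEdges {j : Fin v × Fin v} (hj : j ∈ orderedEdges G) :
    1 ≤ G.maxDegree :=
  ((G.degree_pos_iff_exists_adj _).2 ⟨_, adj_of_mem_orderedEdges hj⟩).trans_le
    (G.degree_le_maxDegree j.1)

theorem exists_truncation_except {ρ : Measure α} {q : ℝ} (hq : 1 ≤ q) {r : ℝ≥0∞} {C : ℝ≥0}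
    (hF : ∀ p, Measurable (Function.uncurry (F p)))
    (hFC : ∀ p, eLpNorm (Function.uncurry (F p)) (ENNReal.ofReal q * r) (ρ.prod ρ) ≤ C)
    (j : Fin v × Fin v) {M : ℝ≥0} (hM : 0 < M) :
    ∃ T : Fin v × Fin v → α → α → ℝ, T j = F j ∧ (∀ p, Measurable (Function.uncurry (T p))) ∧
      (∀ p x y, |T p x y| ≤ |F p x y|) ∧ (∀ p ≠ j, ∀ x y, |T p x y| ≤ M) ∧
      ∀ p, eLpNorm (Function.uncurry fun x y => F p x y - T p x y) r (ρ.prod ρ) ≤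
        (M ^ (1 - q) * C ^ q : ℝ≥0) := by
  have hclip : ∀ p ≠ j,
      Function.update (fun p x y => clip M (F p x y)) j (F j) p = fun x y => clip M (F p x y) :=
    fun p hp => Function.update_of_ne hp _ _
  refine ⟨_, Function.update_self j (F j) fun p x y => clip M (F p x y), fun p => ?_,
    fun p x y => ?_, fun p hp x y => ?_, fun p => ?_⟩
  · obtain rfl | hp := eq_or_ne p j
    · simpa only [Function.update_self] using hF p
    · rw [hclip p hp]
      exact (measurable_clip M).comp (hF p)
  · obtain rfl | hp := eq_or_ne p j
    · rw [Function.update_self]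
    · rw [hclip p hp]
      exact abs_clip_le_abs M.2 _
  · rw [hclip p hp]
    exact abs_clip_le M.2 _
  · obtain rfl | hp := eq_or_ne p j
    · simp [Function.uncurry_def]
    · rw [hclip p hp]
      refine (eLpNorm_sub_clip_le (Function.uncurry (F p)) (NNReal.coe_pos.2 hM) hq _).trans ?_
      rw [ENNReal.coe_mul, ENNReal.coe_rpow_of_nonneg _ (zero_le_one.trans hq), ← NNReal.coe_rpow,
        ENNReal.ofReal_coe_nnreal]
      gcongr
      exact hFC p

theorem abs_edgeIntegral_le {q : ℝ} (hq : 1 ≤ q) {C : ℝ≥0}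
    (hF : ∀ p, Measurable (Function.uncurry (F p)))
    (hFC : ∀ p, eLpNorm (Function.uncurry (F p)) (ENNReal.ofReal q * G.maxDegree) (ρ.prod ρ) ≤ C)
    {j : Fin v × Fin v} (hj : j ∈ orderedEdges G) {δ : ℝ}
    (hcut : CutNormLE ρ (Function.uncurry (F j)) δ) {M : ℝ≥0} (hM : 1 ≤ M)
    {g : α → ℝ} (hg : Measurable g) (hg1 : ∀ x, |g x| ≤ 1) :
    |edgeIntegral G ρ F fun x => ∏ a, g (x a)| ≤
      (orderedEdges G).card * (C ^ ((orderedEdges G).card - 1) * (M ^ (1 - q) * C ^ q)) +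
        9 * (M ^ (orderedEdges G).card * M ^ (orderedEdges G).card) * δ := by
  obtain ⟨T, hTj, hTm, hTF, hTM, hFT⟩ :=
    exists_truncation_except hq hF hFC j (one_pos.trans_le hM)
  have hFD : ∀ p, eLpNorm (Function.uncurry (F p)) G.maxDegree (ρ.prod ρ) ≤ C := fun p =>
    (eLpNorm_le_eLpNorm_of_exponent_le (le_mul_of_one_le_left' (by simpa using hq))
      (hF p).aestronglyMeasurable).trans (hFC p)
  have hTD : ∀ p, eLpNorm (Function.uncurry (T p)) G.maxDegree (ρ.prod ρ) ≤ C := fun p =>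
    (eLpNorm_mono fun z => hTF p z.1 z.2).trans (hFD p)
  have hFj : Integrable (Function.uncurry (F j)) (ρ.prod ρ) :=
    MemLp.integrable (by exact_mod_cast one_le_maxDegree_of_mem_orderedEdges hj)
      ⟨(hF j).aestronglyMeasurable, (hFD j).trans_lt ENNReal.coe_lt_top⟩
  set w : (Fin v → α) → ℝ := fun x => ∏ a, g (x a)
  have htrunc := abs_edgeIntegral_sub_le hF hTm hFD hTD (measurable_prod_apply hg)
    (abs_prod_apply_le_one hg1) hFT
  have hbdd := abs_edgeIntegral_le_of_bounded hTm hj (hTj ▸ hcut) (hTj ▸ hFj)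
    (NNReal.one_le_coe.2 hM) hTM hg hg1
  have htri := abs_add_le (edgeIntegral G ρ F w - edgeIntegral G ρ T w) (edgeIntegral G ρ T w)
  rw [sub_add_cancel] at htri
  exact htri.trans (add_le_add (mod_cast htrunc) hbdd)

theorem exists_mul_rpow_one_sub_le (K : ℝ≥0) {q : ℝ} (hq : 1 < q) {η : ℝ} (hη : 0 < η) :
    ∃ M : ℝ≥0, 1 ≤ M ∧ K * (M : ℝ) ^ (1 - q) ≤ η := by
  have h : Tendsto (fun M : ℝ => K * M ^ (1 - q)) atTop (nhds 0) := by
    simpa using (tendsto_rpow_neg_atTop (sub_pos.2 hq)).const_mul (K : ℝ)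
  obtain ⟨M, hMη, hM⟩ := ((h.eventually_le_const hη).and (eventually_ge_atTop 1)).exists
  exact ⟨⟨M, zero_le_one.trans hM⟩, hM, hMη⟩

theorem abs_edgeIntegral_update_sub_update_le {q : ℝ} (hq : 1 ≤ q) {C : ℝ≥0}
    (hF : ∀ p, Measurable (Function.uncurry (F p)))
    (hFC : ∀ p, eLpNorm (Function.uncurry (F p)) (ENNReal.ofReal q * G.maxDegree) (ρ.prod ρ) ≤ C)
    {j : Fin v × Fin v} (hj : j ∈ orderedEdges G) {K L : α → α → ℝ}
    (hK : Measurable (Function.uncurry K)) (hL : Measurable (Function.uncurry L))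
    (hKC : eLpNorm (Function.uncurry K) (ENNReal.ofReal q * G.maxDegree) (ρ.prod ρ) ≤ C)
    (hLC : eLpNorm (Function.uncurry L) (ENNReal.ofReal q * G.maxDegree) (ρ.prod ρ) ≤ C)
    {δ : ℝ} (hcut : CutNormLE ρ (Function.uncurry fun x y => K x y - L x y) δ)
    {M : ℝ≥0} (hM : 1 ≤ M) {g : α → ℝ} (hg : Measurable g) (hg1 : ∀ x, |g x| ≤ 1) :
    |edgeIntegral G ρ (Function.update F j K) (fun x => ∏ a, g (x a)) -
        edgeIntegral G ρ (Function.update F j L) (fun x => ∏ a, g (x a))| ≤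
      (orderedEdges G).card *
          ((2 * C) ^ ((orderedEdges G).card - 1) * (M ^ (1 - q) * (2 * C) ^ q)) +
        9 * (M ^ (orderedEdges G).card * M ^ (orderedEdges G).card) * δ := by
  have hD1 : 1 ≤ (G.maxDegree : ℝ≥0∞) := by
    exact_mod_cast one_le_maxDegree_of_mem_orderedEdges hj
  have hDq : (G.maxDegree : ℝ≥0∞) ≤ ENNReal.ofReal q * G.maxDegree :=
    le_mul_of_one_le_left' (by simpa using hq)
  have hne : ∀ {R : α → α → ℝ}, Measurable (Function.uncurry R) →
      eLpNorm (Function.uncurry R) (ENNReal.ofReal q * G.maxDegree) (ρ.prod ρ) ≤ C →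
      eLpNorm (Function.uncurry R) G.maxDegree (ρ.prod ρ) ≠ ⊤ := fun hR hRC =>
    ne_top_of_le_ne_top ENNReal.coe_ne_top
      ((eLpNorm_le_eLpNorm_of_exponent_le hDq hR.aestronglyMeasurable).trans hRC)
  rw [edgeIntegral_update_sub_update hF (fun p => hne (hF p) (hFC p)) (measurable_prod_apply hg)
    (abs_prod_apply_le_one hg1) hj hK hL (hne hK hKC) (hne hL hLC)]
  have h2C : ((2 * C : ℝ≥0) : ℝ≥0∞) = C + C := by push_cast; ring
  refine mod_cast abs_edgeIntegral_le (C := 2 * C) hq (fun p => ?_) (fun p => ?_) hj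
    (by simpa only [Function.update_self] using hcut) hM hg hg1 <;>
    obtain rfl | hp := eq_or_ne p j
  · rw [Function.update_self]
    exact hK.sub hL
  · rw [Function.update_of_ne hp]
    exact hF p
  · rw [Function.update_self, h2C]
    exact (eLpNorm_sub_le hK.aestronglyMeasurable hL.aestronglyMeasurable (hD1.trans hDq)).trans
      (add_le_add hKC hLC)
  · rw [Function.update_of_ne hp, h2C]
    exact (hFC p).trans le_self_add

theorem exists_cutNormLE_abs_edgeIntegral_sub_le (G : SimpleGraph (Fin v)) [DecidableRel G.Adj]
    (ρ : Measure α) [IsProbabilityMeasure ρ] {q : ℝ} (hq : 1 < q) (C : ℝ≥0) {ε : ℝ} (hε : 0 < ε) :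
    ∃ δ > 0, ∀ U W : α → α → ℝ, Measurable (Function.uncurry U) →
      Measurable (Function.uncurry W) →
      eLpNorm (Function.uncurry U) (ENNReal.ofReal q * G.maxDegree) (ρ.prod ρ) ≤ C →
      eLpNorm (Function.uncurry W) (ENNReal.ofReal q * G.maxDegree) (ρ.prod ρ) ≤ C →
      CutNormLE ρ (Function.uncurry fun x y => U x y - W x y) δ →
      ∀ g : α → ℝ, Measurable g → (∀ x, |g x| ≤ 1) →
        |edgeIntegral G ρ (fun _ => U) (fun x => ∏ a, g (x a)) -
          edgeIntegral G ρ (fun _ => W) (fun x => ∏ a, g (x a))| ≤ ε := by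
  set N := (orderedEdges G).card
  set η : ℝ := ε / (2 * (N + 1))
  have hη : 0 < η := by positivity
  obtain ⟨M, hM, hMη⟩ := exists_mul_rpow_one_sub_le (N * ((2 * C) ^ (N - 1) * (2 * C) ^ q)) hq hη
  have hM0 : (0 : ℝ) < M := one_pos.trans_le hM
  refine ⟨η / (9 * (M ^ N * M ^ N)), by positivity, fun U W hU hW hUC hWC hcut g hg hg1 => ?_⟩
  rw [← edgeIntegral_piecewise_orderedEdges (fun _ => U) fun _ => W]
  have hstep : dist (edgeIntegral G ρ ((orderedEdges G).piecewise (fun _ => U) fun _ => W)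
      fun x => ∏ a, g (x a)) (edgeIntegral G ρ (fun _ => W) fun x => ∏ a, g (x a)) ≤
      N * (2 * η) := by
    refine dist_piecewise_le_card_mul (Φ := fun F => edgeIntegral G ρ F fun x => ∏ a, g (x a))
      fun F hF j hj => ?_
    refine (abs_edgeIntegral_update_sub_update_le hq.le (fun p => ?_) (fun p => ?_) hj hU hW hUC
      hWC hcut hM hg hg1).trans ?_
    · obtain h | h := hF p <;> rwa [h]
    · obtain h | h := hF p <;> rwa [h]
    · rw [mul_div_cancel₀ _ (by positivity)]
      push_cast at hMη
      linarith
  refine hstep.trans ?_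
  have hNη : (N : ℝ) * (2 * η) = ε * (N / (N + 1)) := by
    simp only [η]
    field_simp
  rw [hNη]
  exact mul_le_of_le_one_right hε.le (div_le_one_of_le₀ (by linarith) (by positivity))

end Counting

section CutLimit

open MeasurableSpace

variable {α : Type*} [MeasurableSpace α] [CountablyGenerated α] {ρ : Measure α}

/-- The membership pattern of a pair of points in the first `k` sets generating the σ-algebra. It
takes finitely many values, and its fibres are rectangles. -/
noncomputable def rectangleCode (k : ℕ) (z : α × α) : (Fin k → Prop) × (Fin k → Prop) :=
  (fun i => z.1 ∈ natGeneratingSequence α i, fun i => z.2 ∈ natGeneratingSequence α i)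

theorem measurable_pattern (k : ℕ) :
    Measurable fun (x : α) (i : Fin k) => x ∈ natGeneratingSequence α i :=
  measurable_pi_lambda _ fun i => (measurableSet_natGeneratingSequence (i : ℕ)).mem

theorem measurable_rectangleCode (k : ℕ) : Measurable (rectangleCode (α := α) k) :=
  ((measurable_pattern k).comp measurable_fst).prodMk ((measurable_pattern k).comp measurable_snd)

/-- The filtration of `α × α` by the finite algebras of unions of rectangles whose sides are atoms
of the first `k` generating sets. -/
noncomputable def rectangleFiltration (α : Type*) [MeasurableSpace α] [CountablyGenerated α] :
    Filtration ℕ (inferInstance : MeasurableSpace (α × α)) where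
  seq k := MeasurableSpace.comap (rectangleCode k) inferInstance
  mono' k l hkl := by
    have hrestrict : Measurable fun c : (Fin l → Prop) × (Fin l → Prop) =>
        (fun i : Fin k => c.1 (i.castLE hkl), fun i : Fin k => c.2 (i.castLE hkl)) := by fun_prop
    exact (hrestrict.comp (comap_measurable (rectangleCode l))).comap_le
  le' k := (measurable_rectangleCode k).comap_le

theorem iSup_rectangleFiltration :
    ⨆ k, rectangleFiltration α k = (inferInstance : MeasurableSpace (α × α)) := by
  refine le_antisymm (iSup_le fun k => (rectangleFiltration α).le k) ?_
  have hcomap : ∀ π : α × α → α, MeasurableSpace.comap π inferInstance =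
      generateFrom (preimage π '' range (natGeneratingSequence α)) := fun π => by
    rw [← comap_generateFrom, generateFrom_natGeneratingSequence]
  refine sup_le ?_ ?_ <;> rw [hcomap] <;> refine generateFrom_le ?_ <;>
    rintro _ ⟨_, ⟨i, rfl⟩, rfl⟩ <;> refine le_iSup (rectangleFiltration α) (i + 1) _ ?_
  · exact ⟨{c | c.1 (Fin.last i)}, (toFinite _).measurableSet, rfl⟩
  · exact ⟨{c | c.2 (Fin.last i)}, (toFinite _).measurableSet, rfl⟩

theorem CutNormLE.abs_setIntegral_rectangleFiltration_le {D : α × α → ℝ} {δ : ℝ}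
    (hcut : CutNormLE ρ D δ) (hD : Integrable D (ρ.prod ρ)) {k : ℕ} {s : Set (α × α)}
    (hs : MeasurableSet[rectangleFiltration α k] s) :
    |∫ z in s, D z ∂ρ.prod ρ| ≤ Fintype.card ((Fin k → Prop) × (Fin k → Prop)) * δ := by
  classical
  obtain ⟨B, -, rfl⟩ := hs
  have hunion : rectangleCode (α := α) k ⁻¹' B =
      ⋃ c ∈ B.toFinite.toFinset, rectangleCode (α := α) k ⁻¹' {c} := by
    ext z; simp
  have hrect : ∀ c : (Fin k → Prop) × (Fin k → Prop),
      |∫ z in rectangleCode k ⁻¹' {c}, D z ∂ρ.prod ρ| ≤ δ := fun c => by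
    rw [show rectangleCode k ⁻¹' {c} =
        ((fun (x : α) (i : Fin k) => x ∈ natGeneratingSequence α i) ⁻¹' {c.1}) ×ˢ
          ((fun (x : α) (i : Fin k) => x ∈ natGeneratingSequence α i) ⁻¹' {c.2}) from
      Set.ext fun _ => Prod.ext_iff]
    exact hcut (measurable_pattern k (measurableSet_singleton c.1))
      (measurable_pattern k (measurableSet_singleton c.2))
  have hδ : 0 ≤ δ := (abs_nonneg _).trans (hcut MeasurableSet.empty MeasurableSet.empty)
  rw [hunion, integral_biUnion_finset _
    (fun c _ => measurable_rectangleCode k (measurableSet_singleton c))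
    (fun c _ d _ hcd => Disjoint.preimage _ (disjoint_singleton.2 hcd))
    fun c _ => hD.integrableOn]
  refine (Finset.abs_sum_le_sum_abs _ _).trans ((Finset.sum_le_sum fun c _ => hrect c).trans ?_)
  rw [Finset.sum_const, nsmul_eq_mul]
  gcongr
  exact Finset.card_le_univ _

variable [IsFiniteMeasure ρ]

theorem CutNormLE.eLpNorm_condExp_rectangleFiltration_le {D : α × α → ℝ} {δ : ℝ}
    (hcut : CutNormLE ρ D δ) (hD : Integrable D (ρ.prod ρ)) (k : ℕ) :
    eLpNorm ((ρ.prod ρ)[D | rectangleFiltration α k]) 1 (ρ.prod ρ) ≤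
      ENNReal.ofReal (2 * (Fintype.card ((Fin k → Prop) × (Fin k → Prop)) * δ)) := by
  set E := (ρ.prod ρ)[D | rectangleFiltration α k]
  have hle := (rectangleFiltration α).le k
  have hs : MeasurableSet[rectangleFiltration α k] {z | 0 ≤ E z} :=
    stronglyMeasurable_condExp.measurable measurableSet_Ici
  have hpos := hcut.abs_setIntegral_rectangleFiltration_le hD hs
  have hneg := hcut.abs_setIntegral_rectangleFiltration_le hD hs.compl
  rw [← setIntegral_condExp hle hD hs] at hpos
  rw [← setIntegral_condExp hle hD hs.compl] at hneg
  have hnorm : ∫ z, ‖E z‖ ∂ρ.prod ρ = ∫ z in {z | 0 ≤ E z}, E z ∂ρ.prod ρ -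
      ∫ z in {z | 0 ≤ E z}ᶜ, E z ∂ρ.prod ρ := by
    rw [← integral_add_compl (hle _ hs) integrable_condExp.norm, sub_eq_add_neg, ← integral_neg]
    congr 1
    · exact setIntegral_congr_fun (hle _ hs) fun z hz => Real.norm_of_nonneg hz
    · exact setIntegral_congr_fun (hle _ hs).compl fun z hz =>
        Real.norm_of_nonpos (not_le.1 (show ¬ 0 ≤ E z from hz)).le
  rw [eLpNorm_one_eq_lintegral_enorm, ← ofReal_integral_norm_eq_lintegral_enorm integrable_condExp,
    hnorm]
  refine ENNReal.ofReal_le_ofReal ?_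
  linarith [le_abs_self (∫ z in {z | 0 ≤ E z}, E z ∂ρ.prod ρ),
    neg_abs_le (∫ z in {z | 0 ≤ E z}ᶜ, E z ∂ρ.prod ρ)]

theorem exists_eLpNorm_condExp_sub_le {W : α × α → ℝ}
    (hWi : Integrable W (ρ.prod ρ)) {p C : ℝ≥0∞} (hp : 1 ≤ p)
    (h : ∀ δ > 0, ∃ U : α × α → ℝ, Integrable U (ρ.prod ρ) ∧ eLpNorm U p (ρ.prod ρ) ≤ C ∧
      CutNormLE ρ (fun z => U z - W z) δ) (k : ℕ) {ε : ℝ} (hε : 0 < ε) :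
    ∃ V : α × α → ℝ, AEStronglyMeasurable V (ρ.prod ρ) ∧ eLpNorm V p (ρ.prod ρ) ≤ C ∧
      eLpNorm (V - (ρ.prod ρ)[W | rectangleFiltration α k]) 1 (ρ.prod ρ) ≤ ENNReal.ofReal ε := by
  set N : ℝ := Nat.cast (Fintype.card ((Fin k → Prop) × (Fin k → Prop)))
  obtain ⟨U, hU, hUC, hcut⟩ := h (ε / (2 * (N + 1))) (by positivity)
  refine ⟨_, integrable_condExp.aestronglyMeasurable,
    (eLpNorm_condExp_le_eLpNorm (m := rectangleFiltration α k) U hp).trans hUC, ?_⟩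
  rw [← eLpNorm_congr_ae (condExp_sub hU hWi _)]
  refine (hcut.eLpNorm_condExp_rectangleFiltration_le (hU.sub hWi) k).trans
    (ENNReal.ofReal_le_ofReal ?_)
  rw [show 2 * (N * (ε / (2 * (N + 1)))) = ε * (N / (N + 1)) by field_simp]
  exact mul_le_of_le_one_right hε.le (div_le_one_of_le₀ (by linarith) (by positivity))

/-- On the finite σ-algebras generated by rectangles cut-norm closeness is `L¹` closeness, and
conditional expectations contract `L^p`; martingale convergence does the rest. -/
theorem eLpNorm_le_of_forall_cutNormLE {W : α × α → ℝ} (hW : Measurable W)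
    (hWi : Integrable W (ρ.prod ρ)) {p C : ℝ≥0∞} (hp : 1 ≤ p)
    (h : ∀ δ > 0, ∃ U : α × α → ℝ, Integrable U (ρ.prod ρ) ∧ eLpNorm U p (ρ.prod ρ) ≤ C ∧
      CutNormLE ρ (fun z => U z - W z) δ) :
    eLpNorm W p (ρ.prod ρ) ≤ C := by
  choose V hV hVC hVW using fun k : ℕ =>
    exists_eLpNorm_condExp_sub_le hWi hp h k (ε := (1 / (k + 1 : ℝ))) (by positivity)
  have hsmall : Tendsto (fun k : ℕ => ENNReal.ofReal (1 / (k + 1 : ℝ))) atTop (nhds 0) := by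
    simpa only [ENNReal.ofReal_zero] using
      ENNReal.tendsto_ofReal (tendsto_one_div_add_atTop_nhds_zero_nat (𝕜 := ℝ))
  have hmart : Tendsto (fun k => eLpNorm ((ρ.prod ρ)[W | rectangleFiltration α k] - W) 1
      (ρ.prod ρ)) atTop (nhds 0) :=
    hWi.tendsto_eLpNorm_condExp (ℱ := rectangleFiltration α)
      (by rw [iSup_rectangleFiltration]; exact hW.stronglyMeasurable)
  have hVlim : Tendsto (fun k => eLpNorm (V k - W) 1 (ρ.prod ρ)) atTop (nhds 0) := by
    refine tendsto_of_tendsto_of_tendsto_of_le_of_le tendsto_const_nhds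
      (by simpa only [add_zero] using hsmall.add hmart) (fun _ => zero_le) fun k => ?_
    rw [← sub_add_sub_cancel (V k) ((ρ.prod ρ)[W | rectangleFiltration α k]) W]
    exact (eLpNorm_add_le ((hV k).sub integrable_condExp.aestronglyMeasurable)
      (integrable_condExp.sub hWi).aestronglyMeasurable le_rfl).trans (add_le_add (hVW k) le_rfl)
  obtain ⟨ns, -, hns⟩ := (tendstoInMeasure_of_tendsto_eLpNorm one_ne_zero hV
    hW.aestronglyMeasurable hVlim).exists_seq_tendsto_ae
  exact (Lp.eLpNorm_lim_le_liminf_eLpNorm (fun k => hV (ns k)) W hns).trans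
    (liminf_le_of_le (by isBoundedDefault) fun b hb => (hb.exists.choose_spec).trans (hVC _))

end CutLimit

/-! ### Soft colourings -/

section SoftColoring

theorem continuous_integral_mul_of_forall_exists_integral_abs_sub_le {X Z : Type*}
    [TopologicalSpace X] [MeasurableSpace Z] {π : Measure Z} {m : X → Z → ℝ}
    (hm : ∀ f, Measurable (m f)) (hm1 : ∀ f z, |m f z| ≤ 1) {K : Z → ℝ} (hK : Integrable K π)
    (h : ∀ ε > 0, ∃ L, Integrable L π ∧ eLpNorm (K - L) 1 π ≤ ENNReal.ofReal ε ∧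
      Continuous fun f => ∫ z, L z * m f z ∂π) :
    Continuous fun f => ∫ z, K z * m f z ∂π := by
  have hint : ∀ {L}, Integrable L π → ∀ f, Integrable (fun z => L z * m f z) π := fun hL f =>
    hL.mul_bdd (c := 1) (hm f).aestronglyMeasurable (ae_of_all _ (hm1 f))
  refine continuous_of_uniform_approx_of_continuous fun u hu => ?_
  obtain ⟨ε, hε, hεu⟩ := Metric.mem_uniformity_dist.1 hu
  obtain ⟨L, hL, hKL, hcont⟩ := h (ε / 2) (half_pos hε)
  refine ⟨_, hcont, fun f => hεu ?_⟩
  rw [eLpNorm_one_eq_lintegral_enorm, ← ofReal_integral_norm_eq_lintegral_enorm (hK.sub hL),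
    ENNReal.ofReal_le_ofReal_iff (half_pos hε).le] at hKL
  calc |∫ z, K z * m f z ∂π - ∫ z, L z * m f z ∂π|
      = ‖∫ z, (K z - L z) * m f z ∂π‖ := by
        rw [← integral_sub (hint hK f) (hint hL f)]
        simp only [sub_mul, Real.norm_eq_abs]
    _ ≤ ∫ z, ‖(K - L) z‖ ∂π := by
        refine norm_integral_le_of_norm_le (hK.sub hL).norm (ae_of_all _ fun z => ?_)
        exact (norm_mul_le _ (m f z)).trans (mul_le_of_le_one_right (norm_nonneg _) (hm1 f z))
    _ < ε := hKL.trans_lt (half_lt_self hε)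

theorem continuous_setIntegral_of_isPiSystem {X Z : Type*} [TopologicalSpace X]
    [mZ : MeasurableSpace Z] {π : Measure Z} [IsFiniteMeasure π] {S : Set (Set Z)}
    (hgen : mZ = MeasurableSpace.generateFrom S) (hpi : IsPiSystem S) {m : X → Z → ℝ}
    (hm : ∀ f, Measurable (m f)) (hm1 : ∀ f z, |m f z| ≤ 1)
    (huniv : Continuous fun f => ∫ z, m f z ∂π)
    (hS : ∀ A ∈ S, Continuous fun f => ∫ z in A, m f z ∂π) {A : Set Z} (hA : MeasurableSet A) :
    Continuous fun f => ∫ z in A, m f z ∂π := by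
  have hint : ∀ f, Integrable (m f) π := fun f =>
    .of_bound (hm f).aestronglyMeasurable 1 (ae_of_all _ (hm1 f))
  induction A, hA using MeasurableSpace.induction_on_inter hgen hpi with
  | empty => simpa only [setIntegral_empty] using continuous_const
  | basic A hA => exact hS A hA
  | compl A hA ih =>
    simp only [fun f => eq_sub_of_add_eq' (integral_add_compl hA (hint f))]
    exact huniv.sub ih
  | iUnion A hdisj hA ih =>
    simp only [fun f => integral_iUnion hA hdisj (hint f).integrableOn]
    refine continuous_tsum ih (summable_measure_toReal (μ := π) hA hdisj) fun i f => ?_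
    exact (norm_setIntegral_le_of_norm_le_const (measure_lt_top π (A i))
      fun z _ => hm1 f z).trans_eq
      (one_mul _)

theorem continuous_integral_mul_of_isPiSystem {X Z : Type*} [TopologicalSpace X]
    [mZ : MeasurableSpace Z] {π : Measure Z} [IsFiniteMeasure π] {S : Set (Set Z)}
    (hgen : mZ = MeasurableSpace.generateFrom S) (hpi : IsPiSystem S) {m : X → Z → ℝ}
    (hm : ∀ f, Measurable (m f)) (hm1 : ∀ f z, |m f z| ≤ 1)
    (huniv : Continuous fun f => ∫ z, m f z ∂π)
    (hS : ∀ A ∈ S, Continuous fun f => ∫ z in A, m f z ∂π) {K : Z → ℝ} (hK : Integrable K π) :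
    Continuous fun f => ∫ z, K z * m f z ∂π := by
  refine continuous_integral_mul_of_forall_exists_integral_abs_sub_le hm hm1 hK fun ε hε => ?_
  suffices ∃ L, eLpNorm (K - L) 1 π ≤ ENNReal.ofReal ε ∧ Integrable L π ∧
      Continuous fun f => ∫ z, L z * m f z ∂π by
    obtain ⟨L, h1, h2, h3⟩ := this
    exact ⟨L, h2, h1, h3⟩
  refine (memLp_one_iff_integrable.2 hK).induction_dense ENNReal.one_ne_top
    (fun L => Integrable L π ∧ Continuous fun f => ∫ z, L z * m f z ∂π)
    (fun b A hA _ δ _ => ⟨A.indicator fun _ => b, by simp, (integrable_const b).indicator hA, ?_⟩)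
    (fun L L' hL hL' => ⟨hL.1.add hL'.1, ?_⟩) (fun L hL => hL.1.aestronglyMeasurable)
    (ENNReal.ofReal_pos.2 hε).ne'
  · simp only [← indicator_mul_left, integral_indicator hA, integral_const_mul]
    exact (continuous_setIntegral_of_isPiSystem hgen hpi hm hm1 huniv hS hA).const_mul b
  · have hint : ∀ {L}, Integrable L π → ∀ f, Integrable (fun z => L z * m f z) π := fun hL f =>
      hL.mul_bdd (c := 1) (hm f).aestronglyMeasurable (ae_of_all _ (hm1 f))
    simp only [Pi.add_apply, add_mul, fun f => integral_add (hint hL.1 f) (hint hL'.1 f)]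
    exact hL.2.add hL'.2

/-- Measurable maps from `Ω` to the simplex of probability vectors on `κ`: the class `ℱ_c` over a
general base space. The measure `ρ` only serves to topologize it, by the integrals of the
coordinates over measurable sets (the weak topology of `L¹`, not separating a.e. equal maps). -/
structure SoftColoring {Ω : Type*} [MeasurableSpace Ω] (ρ : Measure Ω) (κ : Type*) [Fintype κ] where
  toFun : Ω → κ → ℝ
  measurable_toFun : Measurable toFun
  toFun_mem : ∀ u, toFun u ∈ stdSimplex ℝ κ

namespace SoftColoring

variable {Ω κ : Type*} [MeasurableSpace Ω] {ρ : Measure Ω} [Fintype κ]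

instance : CoeFun (SoftColoring ρ κ) fun _ => Ω → κ → ℝ := ⟨toFun⟩

variable (f : SoftColoring ρ κ) (r : κ)

theorem measurable_apply : Measurable fun u => f u r :=
  measurable_pi_iff.1 f.measurable_toFun r

theorem nonneg (u : Ω) : 0 ≤ f u r := (f.toFun_mem u).1 r

theorem sum_eq_one (u : Ω) : ∑ r, f u r = 1 := (f.toFun_mem u).2

theorem le_one (u : Ω) : f u r ≤ 1 :=
  (mem_Icc_of_mem_stdSimplex (f.toFun_mem u) r).2

theorem abs_le_one (u : Ω) : |f u r| ≤ 1 := by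
  rw [abs_of_nonneg (f.nonneg r u)]
  exact f.le_one r u

theorem integrable [IsFiniteMeasure ρ] : Integrable (fun u => f u r) ρ :=
  .of_bound (f.measurable_apply r).aestronglyMeasurable 1 (ae_of_all _ (f.abs_le_one r))

/-- The integrals of the coordinates of a soft colouring over measurable sets. -/
noncomputable def setIntegrals (f : SoftColoring ρ κ) (p : {A : Set Ω // MeasurableSet A} × κ) :
    ℝ :=
  ∫ u in p.1, f u p.2 ∂ρ

noncomputable instance : UniformSpace (SoftColoring ρ κ) := .comap setIntegrals inferInstance

theorem uniformContinuous_setIntegrals :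
    UniformContinuous (setIntegrals : SoftColoring ρ κ → _) := uniformContinuous_comap

theorem continuous_setIntegral {A : Set Ω} (hA : MeasurableSet A) :
    Continuous fun f : SoftColoring ρ κ => ∫ u in A, f u r ∂ρ :=
  (continuous_apply (⟨⟨A, hA⟩, r⟩ : {A : Set Ω // MeasurableSet A} × κ)).comp
    uniformContinuous_setIntegrals.continuous

variable [IsFiniteMeasure ρ]

theorem continuous_integral_mul {h : Ω → ℝ} (hh : Integrable h ρ) :
    Continuous fun f : SoftColoring ρ κ => ∫ u, h u * f u r ∂ρ :=
  continuous_integral_mul_of_isPiSystem MeasurableSpace.generateFrom_measurableSet.symm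
    MeasurableSpace.isPiSystem_measurableSet (fun f => f.measurable_apply r)
    (fun f => f.abs_le_one r)
    (by simpa only [setIntegral_univ] using continuous_setIntegral r MeasurableSet.univ)
    (fun _ => continuous_setIntegral r) hh

theorem continuous_integral_mul_prod {ι : Type*} [Fintype ι] {K : (ι → Ω) → ℝ}
    (hK : Integrable K (Measure.pi fun _ : ι => ρ)) :
    Continuous fun f : SoftColoring ρ κ =>
      ∫ x, K x * ∏ a, f (x a) r ∂Measure.pi fun _ : ι => ρ := by
  refine continuous_integral_mul_of_isPiSystem generateFrom_pi.symm isPiSystem_pi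
    (fun f : SoftColoring ρ κ => measurable_prod_apply (f.measurable_apply r))
    (fun f => abs_prod_apply_le_one (f.abs_le_one r)) ?_ ?_ hK
  · simp only [fun f : SoftColoring ρ κ => integral_fintype_prod_eq_prod (fun _ : ι => (f · r))
      (μ := fun _ => ρ)]
    exact continuous_finsetProd _ fun _ _ => by
      simpa only [setIntegral_univ] using continuous_setIntegral r MeasurableSet.univ
  · rintro _ ⟨A, hA, rfl⟩
    simp only [Measure.restrict_pi_pi, fun f : SoftColoring ρ κ =>
      integral_fintype_prod_eq_prod (fun _ : ι => (f · r)) (μ := fun a => ρ.restrict (A a))]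
    exact continuous_finsetProd _ fun a _ => continuous_setIntegral r (hA a (mem_univ a))

end SoftColoring

end SoftColoring

section Compactness

theorem exists_tendsto_ultrafilter_setIntegral {X Z : Type*} [MeasurableSpace Z] {π : Measure Z}
    [IsFiniteMeasure π] (𝓤 : Ultrafilter X) {m : X → Z → ℝ} {C : ℝ≥0}
    (hm : ∀ f, AEStronglyMeasurable (m f) π) (hC : ∀ f, eLpNorm (m f) 2 π ≤ C) :
    ∃ g : Z → ℝ, Measurable g ∧ Integrable g π ∧ ∀ A, MeasurableSet A →
      Tendsto (fun f => ∫ z in A, m f z ∂π) 𝓤 (nhds (∫ z in A, g z ∂π)) := by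
  have hmem : ∀ f, MemLp (m f) 2 π := fun f => ⟨hm f, (hC f).trans_lt ENNReal.coe_lt_top⟩
  let J : X → WeakDual ℝ (Lp ℝ 2 π) := fun f =>
    StrongDual.toWeakDual (InnerProductSpace.toDual ℝ _ ((hmem f).toLp (m f)))
  have hball : ∀ f, J f ∈ WeakDual.toStrongDual ⁻¹' Metric.closedBall 0 (C : ℝ) := fun f => by
    change InnerProductSpace.toDual ℝ _ ((hmem f).toLp (m f)) ∈ Metric.closedBall 0 (C : ℝ)
    rw [mem_closedBall_zero_iff, LinearIsometryEquiv.norm_map, Lp.norm_toLp]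
    exact ENNReal.toReal_le_coe_of_le_coe (hC f)
  obtain ⟨ℓ, -, hℓ⟩ := (WeakDual.isCompact_closedBall (0 : StrongDual ℝ (Lp ℝ 2 π)) C)
    |>.ultrafilter_le_nhds (𝓤.map J) (le_principal_iff.2 (mem_map.2 (univ_mem' hball)))
  set g : Lp ℝ 2 π := (InnerProductSpace.toDual ℝ _).symm (WeakDual.toStrongDual ℓ)
  refine ⟨g, (Lp.stronglyMeasurable g).measurable, (Lp.memLp g).integrable one_le_two,
    fun A hA => ?_⟩
  set χ : Lp ℝ 2 π := indicatorConstLp 2 hA (measure_ne_top π A) 1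
  have hJ : ∀ f, J f χ = ∫ z in A, m f z ∂π := fun f => by
    change inner ℝ ((hmem f).toLp (m f)) χ = _
    rw [real_inner_comm, L2.inner_indicatorConstLp_one]
    exact setIntegral_congr_ae hA ((hmem f).coeFn_toLp.mono fun z hz _ => hz)
  have hg : ℓ χ = ∫ z in A, g z ∂π := by
    rw [← L2.inner_indicatorConstLp_one hA (measure_ne_top π A), real_inner_comm]
    exact (InnerProductSpace.toDual_symm_apply (𝕜 := ℝ)).symm
  simp only [← hJ, ← hg]
  exact ((WeakDual.eval_continuous χ).tendsto ℓ).comp hℓ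

namespace SoftColoring

variable {Ω κ : Type*} [MeasurableSpace Ω] {ρ : Measure Ω} [Fintype κ] [IsFiniteMeasure ρ]

theorem ae_mem_stdSimplex_of_tendsto_setIntegral {l : Filter (SoftColoring ρ κ)} [l.NeBot]
    {g : Ω → κ → ℝ} (hg : ∀ r, Integrable (fun u => g u r) ρ)
    (hlim : ∀ r A, MeasurableSet A →
      Tendsto (fun f : SoftColoring ρ κ => ∫ u in A, f u r ∂ρ) l (nhds (∫ u in A, g u r ∂ρ))) :
    ∀ᵐ u ∂ρ, g u ∈ stdSimplex ℝ κ := by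
  have hnonneg : ∀ᵐ u ∂ρ, ∀ r, 0 ≤ g u r := ae_all_iff.2 fun r =>
    ae_nonneg_of_forall_setIntegral_nonneg (hg r) fun A hA _ =>
      ge_of_tendsto' (hlim r A hA) fun f => setIntegral_nonneg hA fun u _ => f.nonneg r u
  have hsum : (fun u => ∑ r, g u r) =ᵐ[ρ] fun _ => 1 := by
    refine Integrable.ae_eq_of_forall_setIntegral_eq _ _ (integrable_finsetSum _ fun r _ => hg r)
      (integrable_const 1) fun A hA _ => ?_
    rw [integral_finsetSum _ fun r _ => (hg r).integrableOn]
    refine tendsto_nhds_unique (tendsto_finsetSum _ fun r _ => hlim r A hA) ?_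
    refine tendsto_const_nhds.congr fun f => ?_
    rw [← integral_finsetSum _ fun r _ => (f.integrable r).integrableOn]
    simp only [f.sum_eq_one]
  filter_upwards [hnonneg, hsum] with u h0 h1 using ⟨h0, h1⟩

instance : CompactSpace (SoftColoring ρ κ) := by
  classical
  refine ⟨isCompact_iff_ultrafilter_le_nhds.2 fun 𝓤 _ => ?_⟩
  choose g hgm hgi hlim using fun r : κ => exists_tendsto_ultrafilter_setIntegral 𝓤
    (C := (ρ univ ^ (2⁻¹ : ℝ)).toNNReal)
    (fun f => (f.measurable_apply r).aestronglyMeasurable (μ := ρ)) fun f => by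
      rw [ENNReal.coe_toNNReal (ENNReal.rpow_ne_top_of_nonneg (by norm_num) (measure_ne_top ρ _))]
      refine (eLpNorm_le_of_ae_bound (C := 1) (ae_of_all ρ (f.abs_le_one r))).trans_eq ?_
      rw [ENNReal.toReal_ofNat, ENNReal.ofReal_one, mul_one]
  have hmem := ae_mem_stdSimplex_of_tendsto_setIntegral (g := fun u r => g r u) hgi hlim
  obtain ⟨f₀⟩ := 𝓤.neBot.nonempty
  have hmeas : Measurable fun u r => g r u := measurable_pi_iff.2 hgm
  let f : SoftColoring ρ κ :=
    { toFun u := if (fun r => g r u) ∈ stdSimplex ℝ κ then fun r => g r u else f₀ u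
      measurable_toFun := Measurable.ite (hmeas (isClosed_stdSimplex ℝ κ).measurableSet) hmeas
        f₀.measurable_toFun
      toFun_mem u := by split_ifs with h; exacts [h, f₀.toFun_mem u] }
  refine ⟨f, mem_univ f, ?_⟩
  change Tendsto id _ _
  rw [(Topology.IsInducing.mk rfl : Topology.IsInducing setIntegrals).tendsto_nhds_iff,
    tendsto_pi_nhds]
  rintro ⟨⟨A, hA⟩, r⟩
  have hf : ∫ u in A, f u r ∂ρ = ∫ u in A, g r u ∂ρ :=
    setIntegral_congr_ae hA (hmem.mono fun u hu _ => congr_fun (if_pos hu) r)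
  exact (hlim r A hA).trans_eq (congrArg nhds hf.symm)

end SoftColoring

end Compactness

/-! ### Entropy -/

section Entropy

variable {κ : Type*} [Fintype κ] {m p : κ → ℝ}

/-- The relative entropy of `p` with respect to `m`, for probability vectors on a finite set. -/
noncomputable def simplexEntropy (m p : κ → ℝ) : ℝ := ∑ r, p r * Real.log (p r / m r)

theorem mul_log_div_eq {m : ℝ} (hm : 0 < m) (t : ℝ) :
    t * Real.log (t / m) = m * (t / m * Real.log (t / m)) := by
  rw [← mul_assoc, mul_div_cancel₀ t hm.ne']

theorem continuous_simplexEntropy (hm : ∀ r, 0 < m r) : Continuous (simplexEntropy m) := by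
  refine continuous_finsetSum _ fun r _ => ?_
  simp only [mul_log_div_eq (hm r)]
  have hdiv : Continuous fun p : κ → ℝ => p r / m r := by fun_prop
  exact (Real.continuous_mul_log.comp hdiv).const_mul (m r)

theorem convexOn_simplexEntropy (hm : ∀ r, 0 < m r) :
    ConvexOn ℝ (stdSimplex ℝ κ) (simplexEntropy m) := by
  refine ⟨convex_stdSimplex ℝ κ, fun p hp q hq a b ha hb hab => ?_⟩
  simp only [simplexEntropy, smul_eq_mul, Finset.mul_sum, ← Finset.sum_add_distrib]
  refine Finset.sum_le_sum fun r _ => ?_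
  have h := Real.convexOn_mul_log.2 (mem_Ici.2 (div_nonneg (hp.1 r) (hm r).le))
    (mem_Ici.2 (div_nonneg (hq.1 r) (hm r).le)) ha hb hab
  simp only [smul_eq_mul] at h
  have hcomb : (a • p + b • q) r / m r = a * (p r / m r) + b * (q r / m r) := by
    simp only [Pi.add_apply, Pi.smul_apply, smul_eq_mul]
    ring
  rw [mul_log_div_eq (hm r), mul_log_div_eq (hm r), mul_log_div_eq (hm r), hcomb]
  linarith [mul_le_mul_of_nonneg_left h (hm r).le]

theorem mul_le_mul_log_div_add {t m l : ℝ} (ht : 0 ≤ t) (hm : 0 < m) :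
    l * t ≤ t * Real.log (t / m) + (m * Real.exp l - t) := by
  obtain rfl | ht := ht.eq_or_lt
  · simp only [mul_zero, zero_mul, sub_zero, zero_add]
    positivity
  · have hlog := Real.log_le_sub_one_of_pos (x := m * Real.exp l / t) (by positivity)
    rw [Real.log_div (by positivity) ht.ne', Real.log_mul hm.ne' (Real.exp_ne_zero l),
      Real.log_exp] at hlog
    rw [Real.log_div ht.ne' hm.ne']
    have hcancel : t * (m * Real.exp l / t) = m * Real.exp l := mul_div_cancel₀ _ ht.ne'
    linarith [mul_le_mul_of_nonneg_left hlog ht.le]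

theorem sum_mul_le_simplexEntropy {l : κ → ℝ} (hm : ∀ r, 0 < m r) (hp : p ∈ stdSimplex ℝ κ)
    (hl : ∑ r, m r * Real.exp (l r) ≤ 1) : ∑ r, l r * p r ≤ simplexEntropy m p := by
  have h := Finset.sum_le_sum fun r (_ : r ∈ Finset.univ) =>
    mul_le_mul_log_div_add (l := l r) (hp.1 r) (hm r)
  rw [Finset.sum_add_distrib, Finset.sum_sub_distrib, hp.2] at h
  exact h.trans (by rw [simplexEntropy]; linarith)

/-- The potential of the mixture of `p` with a small proportion `s` of `m`. It is bounded, and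
nearly attains the supremum in the dual formula for the relative entropy of `p`. -/
noncomputable def mixtureTilt (m : κ → ℝ) (s : ℝ) (p : κ → ℝ) (r : κ) : ℝ :=
  Real.log (((1 - s) * p r + s * m r) / m r)

theorem sum_mul_exp_mixtureTilt (hm : m ∈ stdSimplex ℝ κ) (hpos : ∀ r, 0 < m r)
    (hp : p ∈ stdSimplex ℝ κ) {s : ℝ} (hs : 0 < s) (hs1 : s ≤ 1) :
    ∑ r, m r * Real.exp (mixtureTilt m s p r) = 1 := by
  have hmul : ∀ r, m r * Real.exp (mixtureTilt m s p r) = (1 - s) * p r + s * m r := fun r => by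
    have hmix : 0 < (1 - s) * p r + s * m r :=
      add_pos_of_nonneg_of_pos (mul_nonneg (sub_nonneg.2 hs1) (hp.1 r)) (mul_pos hs (hpos r))
    rw [mixtureTilt, Real.exp_log (div_pos hmix (hpos r)), mul_div_cancel₀ _ (hpos r).ne']
  simp only [hmul, Finset.sum_add_distrib, ← Finset.mul_sum, hp.2, hm.2]
  ring

theorem abs_mixtureTilt_le (hm : m ∈ stdSimplex ℝ κ) (hpos : ∀ r, 0 < m r)
    (hp : p ∈ stdSimplex ℝ κ) {s : ℝ} (hs : 0 < s) (hs1 : s ≤ 1) (r : κ) :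
    |mixtureTilt m s p r| ≤ max |Real.log s| |Real.log (1 / m r)| := by
  have hp1 := mem_Icc_of_mem_stdSimplex hp r
  have hm1 := mem_Icc_of_mem_stdSimplex hm r
  have hs' := sub_nonneg.2 hs1
  have hlow : s ≤ ((1 - s) * p r + s * m r) / m r := by
    rw [le_div_iff₀ (hpos r)]
    linarith [mul_nonneg hs' hp1.1]
  have hup : (1 - s) * p r + s * m r ≤ 1 := by
    linarith [mul_le_mul_of_nonneg_left hp1.2 hs', mul_le_mul_of_nonneg_left hm1.2 hs.le]
  exact abs_le_max_abs_abs (Real.log_le_log hs hlow) (Real.log_le_log (hs.trans_le hlow)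
    (div_le_div_of_nonneg_right hup (hpos r).le))

theorem simplexEntropy_add_log_le (hpos : ∀ r, 0 < m r) (hp : p ∈ stdSimplex ℝ κ) {s : ℝ}
    (hs : 0 ≤ s) (hs1 : s < 1) :
    simplexEntropy m p + Real.log (1 - s) ≤ ∑ r, mixtureTilt m s p r * p r := by
  have hlog : Real.log (1 - s) = ∑ r, p r * Real.log (1 - s) := by
    rw [← Finset.sum_mul, hp.2, one_mul]
  rw [simplexEntropy, hlog, ← Finset.sum_add_distrib]
  refine Finset.sum_le_sum fun r _ => ?_
  obtain hr | hr := (hp.1 r).eq_or_lt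
  · simp only [← hr, zero_mul, mul_zero, add_zero, le_refl]
  · have hs' := sub_pos.2 hs1
    have hpm := div_pos hr (hpos r)
    rw [← mul_add, ← Real.log_mul hpm.ne' hs'.ne', mul_comm (mixtureTilt m s p r)]
    refine mul_le_mul_of_nonneg_left (Real.log_le_log (mul_pos hpm hs') ?_) hr.le
    rw [div_mul_eq_mul_div]
    refine div_le_div_of_nonneg_right ?_ (hpos r).le
    linarith [mul_nonneg hs (hpos r).le]

/-- A bounded potential whose exponential moments under the probability vector `m` are at most `1`.
These potentials are the half-spaces that test the entropy of a soft colouring, and the exponents of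
the corresponding Chernoff bounds. -/
structure IsTilt {Ω : Type*} [MeasurableSpace Ω] (m : κ → ℝ) (l : Ω → κ → ℝ) : Prop where
  measurable : Measurable l
  bounded : ∀ r, ∃ M, ∀ u, |l u r| ≤ M
  sum_mul_exp_le_one : ∀ u, ∑ r, m r * Real.exp (l u r) ≤ 1

variable {Ω : Type*} [MeasurableSpace Ω] {ρ : Measure Ω} {l : Ω → κ → ℝ}

theorem IsTilt.integrable [IsFiniteMeasure ρ] (hl : IsTilt m l) (r : κ) :
    Integrable (fun u => l u r) ρ := by
  obtain ⟨M, hM⟩ := hl.bounded r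
  exact .of_bound (measurable_pi_iff.1 hl.measurable r).aestronglyMeasurable M (ae_of_all _ hM)

theorem IsTilt.integrable_mul [IsFiniteMeasure ρ] (hl : IsTilt m l) (f : SoftColoring ρ κ)
    (r : κ) : Integrable (fun u => l u r * f u r) ρ :=
  (hl.integrable r).mul_bdd (c := 1) (f.measurable_apply r).aestronglyMeasurable
    (ae_of_all _ (f.abs_le_one r))

namespace SoftColoring

/-- The entropy `∫ Σ_r f_r log (f_r / m_r)` of a soft colouring relative to the probability
vector `m`. -/
noncomputable def entropy (m : κ → ℝ) (f : SoftColoring ρ κ) : ℝ :=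
  ∫ u, simplexEntropy m (f u) ∂ρ

/-- The pairing `∫ Σ_r l_r f_r` of a soft colouring with a potential. -/
noncomputable def pairing (l : Ω → κ → ℝ) (f : SoftColoring ρ κ) : ℝ :=
  ∫ u, ∑ r, l u r * f u r ∂ρ

theorem continuous_pairing [IsFiniteMeasure ρ] (hl : IsTilt m l) :
    Continuous (pairing l : SoftColoring ρ κ → ℝ) := by
  unfold pairing
  simp only [fun f : SoftColoring ρ κ => integral_finsetSum Finset.univ fun r _ =>
    hl.integrable_mul f r]
  exact continuous_finsetSum _ fun r _ => continuous_integral_mul r (hl.integrable r)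

variable (hpos : ∀ r, 0 < m r)
include hpos

theorem integrable_simplexEntropy [IsFiniteMeasure ρ] (f : SoftColoring ρ κ) :
    Integrable (fun u => simplexEntropy m (f u)) ρ := by
  obtain ⟨M, hM⟩ := (isCompact_stdSimplex ℝ κ).exists_bound_of_continuousOn
    (continuous_simplexEntropy hpos).continuousOn
  exact .of_bound ((continuous_simplexEntropy hpos).measurable.comp
    f.measurable_toFun).aestronglyMeasurable M (ae_of_all _ fun u => hM _ (f.toFun_mem u))

theorem pairing_le_entropy [IsFiniteMeasure ρ] (hl : IsTilt m l) (f : SoftColoring ρ κ) :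
    pairing l f ≤ entropy m f :=
  integral_mono (integrable_finsetSum _ fun r _ => hl.integrable_mul f r)
    (f.integrable_simplexEntropy hpos) fun u =>
      sum_mul_le_simplexEntropy hpos (f.toFun_mem u) (hl.sum_mul_exp_le_one u)

theorem exists_isTilt_lt_pairing [IsProbabilityMeasure ρ] (hm : m ∈ stdSimplex ℝ κ)
    {f : SoftColoring ρ κ} {a : ℝ} (ha : a < entropy m f) :
    ∃ l : Ω → κ → ℝ, IsTilt m l ∧ a < pairing l f := by
  obtain ⟨t, hat, ht⟩ := exists_between (sub_neg.2 ha)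
  set s := 1 - Real.exp t
  have hs : 0 < s := sub_pos.2 (Real.exp_lt_one_iff.2 ht)
  have hs1 : s < 1 := sub_lt_self 1 (Real.exp_pos t)
  have htilt : IsTilt m fun u => mixtureTilt m s (f u) :=
    { measurable := measurable_pi_iff.2 fun r => Real.measurable_log.comp
        ((((f.measurable_apply r).const_mul _).add_const _).div_const _)
      bounded := fun r => ⟨_, fun u => abs_mixtureTilt_le hm hpos (f.toFun_mem u) hs hs1.le r⟩
      sum_mul_exp_le_one := fun u =>
        (sum_mul_exp_mixtureTilt hm hpos (f.toFun_mem u) hs hs1.le).le }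
  refine ⟨_, htilt, ?_⟩
  calc a < entropy m f + t := by linarith
    _ = ∫ u, (simplexEntropy m (f u) + Real.log (1 - s)) ∂ρ := by
      rw [integral_add (f.integrable_simplexEntropy hpos) (integrable_const _), entropy,
        integral_const, probReal_univ, one_smul, sub_sub_cancel, Real.log_exp]
    _ ≤ _ := integral_mono ((f.integrable_simplexEntropy hpos).add (integrable_const _))
      (integrable_finsetSum _ fun r _ => htilt.integrable_mul f r) fun u =>
        simplexEntropy_add_log_le hpos (f.toFun_mem u) hs.le hs1

theorem entropy_nonneg (hm : m ∈ stdSimplex ℝ κ) (f : SoftColoring ρ κ) :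
    0 ≤ entropy m f :=
  integral_nonneg fun u => by
    simpa only [Pi.zero_apply, zero_mul, Finset.sum_const_zero] using
      sum_mul_le_simplexEntropy (l := 0) hpos (f.toFun_mem u) (by simp [hm.2])

theorem lowerSemicontinuous_entropy [IsProbabilityMeasure ρ] (hm : m ∈ stdSimplex ℝ κ) :
    LowerSemicontinuous (entropy m : SoftColoring ρ κ → ℝ) := fun f a ha => by
  obtain ⟨l, hl, hlf⟩ := exists_isTilt_lt_pairing hpos hm ha
  filter_upwards [(isOpen_lt continuous_const (continuous_pairing hl)).mem_nhds hlf] with g hg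
  exact hg.trans_le (pairing_le_entropy hpos hl g)

end SoftColoring

end Entropy

/-! ### Equipartitions and U-statistics -/

section Equipartition

variable {Ω : Type*} [MeasurableSpace Ω] {ρ : Measure Ω}

theorem measurable_uncurry_comp {n : ℕ} {τ : Ω → Fin n} (hτ : Measurable τ)
    (Q : Fin n → Fin n → ℝ) : Measurable (Function.uncurry fun x y => Q (τ x) (τ y)) :=
  (Measurable.of_discrete (f := Function.uncurry Q)).comp (hτ.prodMap hτ)

theorem integral_comp_mul_prod {v : ℕ} {η : Type*} [Fintype η] [MeasurableSpace η]
    [MeasurableSingletonClass η] [SigmaFinite ρ] {τ : Ω → η} (hτ : Measurable τ)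
    (K : (Fin v → η) → ℝ) {g : Ω → ℝ} (hg : Integrable g ρ) :
    ∫ x, K (τ ∘ x) * ∏ a, g (x a) ∂Measure.pi (fun _ : Fin v => ρ) =
      ∑ i, K i * ∏ a, ∫ u in τ ⁻¹' {i a}, g u ∂ρ := by
  classical
  have hcell : ∀ j, MeasurableSet (τ ⁻¹' {j}) := fun j => hτ (measurableSet_singleton j)
  have hsum : ∀ x : Fin v → Ω, K (τ ∘ x) * ∏ a, g (x a) =
      ∑ i, K i * ∏ a, (τ ⁻¹' {i a}).indicator g (x a) := fun x => by
    rw [Finset.sum_eq_single (τ ∘ x)]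
    · simp
    · intro i _ hi
      obtain ⟨a, ha⟩ := Function.ne_iff.1 hi
      have hzero : (τ ⁻¹' {i a}).indicator g (x a) = 0 :=
        indicator_of_notMem (s := τ ⁻¹' {i a}) (Ne.symm ha) g
      rw [Finset.prod_eq_zero (Finset.mem_univ a) hzero, mul_zero]
    · exact fun h => absurd (Finset.mem_univ _) h
  simp only [hsum]
  rw [integral_finsetSum _ fun i _ => (Integrable.fintype_prod fun a =>
    hg.indicator (hcell (i a))).const_mul (K i)]
  refine Finset.sum_congr rfl fun i _ => ?_
  rw [integral_const_mul, integral_fintype_prod_eq_prod fun a => (τ ⁻¹' {i a}).indicator g]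
  simp only [integral_indicator (hcell _)]

/-- `τ` is the index map of a measurable partition of `Ω` into `n` cells of measure `1 / n`. -/
structure IsEquipartition {n : ℕ} (ρ : Measure Ω) (τ : Ω → Fin n) : Prop where
  measurable : Measurable τ
  measureReal_preimage : ∀ i, ρ.real (τ ⁻¹' {i}) = (n : ℝ)⁻¹

namespace IsEquipartition

variable {n : ℕ} {τ : Ω → Fin n} (hτ : IsEquipartition ρ τ)
include hτ

theorem comp {Ω' : Type*} [MeasurableSpace Ω'] {ρ' : Measure Ω'} {σ : Ω' → Ω}
    (hσ : MeasurePreserving σ ρ' ρ) : IsEquipartition ρ' (τ ∘ σ) where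
  measurable := hτ.measurable.comp hσ.measurable
  measureReal_preimage i := by
    rw [preimage_comp, hσ.measureReal_preimage
      (hτ.measurable (measurableSet_singleton i)).nullMeasurableSet, hτ.measureReal_preimage]

theorem integral_comp [IsProbabilityMeasure ρ] {v : ℕ} (K : (Fin v → Fin n) → ℝ) :
    ∫ x, K (τ ∘ x) ∂Measure.pi (fun _ : Fin v => ρ) = (∑ i, K i) / (n : ℝ) ^ v := by
  have h := integral_comp_mul_prod hτ.measurable K (integrable_const (μ := ρ) 1)
  simp only [Finset.prod_const_one, mul_one, setIntegral_const, smul_eq_mul,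
    hτ.measureReal_preimage, Finset.prod_const, Finset.card_univ, Fintype.card_fin] at h
  rw [h, ← Finset.sum_mul, inv_pow, div_eq_mul_inv]

end IsEquipartition

theorem tendsto_card_not_injective_div (v : ℕ) :
    Tendsto (fun n : ℕ => (∑ i : Fin v → Fin n, if Function.Injective i then (0 : ℝ) else 1) /
      (n : ℝ) ^ v) atTop (nhds 0) := by
  have hcard : ∀ n : ℕ, (∑ i : Fin v → Fin n, if Function.Injective i then (0 : ℝ) else 1) =
      (n : ℝ) ^ v - n.descFactorial v := fun n => by
    have hinj : (Finset.univ.filter fun i : Fin v → Fin n => Function.Injective i).card =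
        n.descFactorial v := by
      rw [← Fintype.card_subtype, Fintype.card_congr (Equiv.subtypeInjectiveEquivEmbedding _ _),
        Fintype.card_embedding_eq, Fintype.card_fin, Fintype.card_fin]
    have hone : ∀ i : Fin v → Fin n, (if Function.Injective i then (0 : ℝ) else 1) =
        1 - if Function.Injective i then 1 else 0 := fun i => by split_ifs <;> norm_num
    simp only [hone, Finset.sum_sub_distrib, Finset.sum_boole, hinj, Finset.sum_const,
      Finset.card_univ, Fintype.card_pi_const, Fintype.card_fin, nsmul_eq_mul, mul_one,
      Nat.cast_pow]
  have hne : ∀ᶠ n : ℕ in atTop, (n : ℝ) ^ v ≠ 0 := by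
    filter_upwards [eventually_gt_atTop 0] with n hn
    positivity
  have h := (Asymptotics.isEquivalent_iff_tendsto_one hne).1 (isEquivalent_descFactorial v)
  refine (by simpa using h.const_sub 1 : Tendsto _ atTop (nhds (0 : ℝ))).congr' ?_
  filter_upwards [hne] with n hn
  simp only [hcard, sub_div, div_self hn]

variable {v : ℕ} (G : SimpleGraph (Fin v)) [DecidableRel G.Adj]

theorem Vstat_sub_Ustat {X : Type*} (φ : (Fin v → X) → ℝ) (n : ℕ) (Q : Fin n → Fin n → ℝ)
    (x : Fin n → X) :
    Vstat G φ n Q x - Ustat G φ n Q x = (∑ i : Fin v → Fin n, if Function.Injective i then 0 else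
      φ (x ∘ i) * edgeProd G fun a b => Q (i a) (i b)) / (n : ℝ) ^ v := by
  rw [Vstat, Ustat, ← sub_div, Finset.sum_filter, ← Finset.sum_sub_distrib]
  congr 1
  exact Finset.sum_congr rfl fun i _ => by split_ifs <;> simp

variable [IsProbabilityMeasure ρ] {n : ℕ} {τ : Ω → Fin n} (hτ : IsEquipartition ρ τ)

include hτ in
omit [IsProbabilityMeasure ρ] in
theorem IsEquipartition.measurableSet_not_injective :
    MeasurableSet {z : Fin v → Ω | ¬Function.Injective (τ ∘ z)} :=
  (measurable_pi_lambda _ fun a => hτ.measurable.comp (measurable_pi_apply a))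
    (Set.toFinite {i : Fin v → Fin n | ¬Function.Injective i}).measurableSet

include hτ in
theorem IsEquipartition.measureReal_not_injective :
    (Measure.pi fun _ : Fin v => ρ).real {z | ¬Function.Injective (τ ∘ z)} =
      (∑ i : Fin v → Fin n, if Function.Injective i then 0 else 1) / (n : ℝ) ^ v := by
  rw [← hτ.integral_comp, ← integral_indicator_one hτ.measurableSet_not_injective]
  congr 1 with z
  simp [indicator_apply]

include hτ in
theorem IsEquipartition.abs_Vstat_sub_Ustat_le {X : Type*} {φ : (Fin v → X) → ℝ}
    (hφ : ∀ y, |φ y| ≤ 1) (Q : Fin n → Fin n → ℝ) (x : Fin n → X) :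
    |Vstat G φ n Q x - Ustat G φ n Q x| ≤
      ∫ z in {z | ¬Function.Injective (τ ∘ z)}, ‖∏ p ∈ orderedEdges G, Q (τ (z p.1)) (τ (z p.2))‖
        ∂Measure.pi fun _ : Fin v => ρ := by
  calc |Vstat G φ n Q x - Ustat G φ n Q x|
      ≤ (∑ i : Fin v → Fin n, if Function.Injective i then 0 else
          ‖edgeProd G fun a b => Q (i a) (i b)‖) / (n : ℝ) ^ v := by
        rw [Vstat_sub_Ustat, abs_div, abs_of_nonneg (by positivity : 0 ≤ (n : ℝ) ^ v)]
        gcongr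
        refine (Finset.abs_sum_le_sum_abs _ _).trans (Finset.sum_le_sum fun i _ => ?_)
        split_ifs
        · exact abs_zero.le
        · rw [abs_mul]
          exact mul_le_of_le_one_left (abs_nonneg _) (hφ _)
    _ = _ := by
        rw [← hτ.integral_comp, ← integral_indicator hτ.measurableSet_not_injective]
        congr 1 with z
        simp only [indicator_apply, mem_ofPred_eq, ite_not, edgeProd_eq_prod, Function.comp_apply]

theorem setIntegral_norm_le_rpow {β : Type*} [MeasurableSpace β] {P : Measure β}
    [IsFiniteMeasure P] {f : β → ℝ} (hf : AEStronglyMeasurable f P) {q : ℝ} (hq : 1 < q) {K : ℝ≥0}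
    (hK : eLpNorm f (ENNReal.ofReal q) P ≤ K) (B : Set β) :
    ∫ z in B, ‖f z‖ ∂P ≤ K * P.real B ^ (1 - 1 / q) := by
  have hq0 : 0 < q := one_pos.trans hq
  have h := (eLpNorm_le_eLpNorm_mul_rpow_measure_univ (μ := P.restrict B) (p := 1)
    (by simpa using hq.le) hf.restrict).trans
      (mul_le_mul_left ((eLpNorm_restrict_le f _ P B).trans hK) _)
  rw [eLpNorm_one_eq_lintegral_enorm, Measure.restrict_apply_univ, ENNReal.toReal_one, div_one,
    ENNReal.toReal_ofReal hq0.le] at h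
  rw [integral_norm_eq_lintegral_enorm hf.restrict, Measure.real]
  have hexp : 0 ≤ 1 - 1 / q := sub_nonneg.2 (by rw [div_le_one hq0]; exact hq.le)
  refine (ENNReal.toReal_mono (ENNReal.mul_ne_top ENNReal.coe_ne_top
    (ENNReal.rpow_ne_top_of_nonneg hexp (measure_ne_top P B))) h).trans_eq ?_
  rw [ENNReal.toReal_mul, ENNReal.coe_toReal, ENNReal.toReal_rpow]

theorem eventually_abs_Vstat_sub_Ustat_le (ρ : Measure Ω) [IsProbabilityMeasure ρ] {q : ℝ}
    (hq : 1 < q) (C : ℝ≥0) {ε : ℝ} (hε : 0 < ε) :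
    ∀ᶠ n : ℕ in atTop, ∀ (τ : Ω → Fin n) (Q : Fin n → Fin n → ℝ), IsEquipartition ρ τ →
      eLpNorm (Function.uncurry fun x y => Q (τ x) (τ y)) (ENNReal.ofReal q * G.maxDegree)
        (ρ.prod ρ) ≤ C →
      ∀ {X : Type*} (φ : (Fin v → X) → ℝ), (∀ y, |φ y| ≤ 1) → ∀ x : Fin n → X,
        |Vstat G φ n Q x - Ustat G φ n Q x| ≤ ε := by
  have hexp : 0 < 1 - 1 / q := by
    rw [sub_pos, div_lt_one (one_pos.trans hq)]
    exact hq
  have hlim := ((tendsto_card_not_injective_div v).rpow_const (Or.inr hexp.le)).const_mul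
    ((C ^ (orderedEdges G).card : ℝ≥0) : ℝ)
  rw [Real.zero_rpow hexp.ne', mul_zero] at hlim
  filter_upwards [hlim.eventually_le_const hε] with n hn τ Q hτ hQC X φ hφ x
  have hQ := measurable_uncurry_comp hτ.measurable Q
  refine (hτ.abs_Vstat_sub_Ustat_le G hφ Q x).trans (le_trans ?_ hn)
  rw [← hτ.measureReal_not_injective]
  refine setIntegral_norm_le_rpow
    (measurable_prod_orderedEdges fun _ => hQ).aestronglyMeasurable hq ?_ _
  refine (eLpNorm_prod_orderedEdges_le G (fun _ => hQ) (by simpa using one_pos.trans hq)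
    ENNReal.ofReal_ne_top).trans ?_
  rw [Finset.prod_const, ENNReal.coe_pow]
  gcongr

end Equipartition

section Averages

variable {Ω κ : Type*} [MeasurableSpace Ω] {ρ : Measure Ω} {n : ℕ} {τ : Ω → Fin n}

theorem integral_eq_sum_setIntegral_preimage (hτ : Measurable τ) {h : Ω → ℝ}
    (hh : Integrable h ρ) : ∫ u, h u ∂ρ = ∑ i, ∫ u in τ ⁻¹' {i}, h u ∂ρ := by
  rw [← integral_iUnion_fintype (fun i => hτ (measurableSet_singleton i))
    (pairwise_disjoint_fiber τ) fun i => hh.integrableOn, ← preimage_iUnion,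
    iUnion_of_singleton, preimage_univ, setIntegral_univ]

variable [Fintype κ]

namespace SoftColoring

/-- The soft colouring which is constant, with value `p i`, on the `i`-th cell of `τ`. -/
def ofCells (hτ : Measurable τ) (p : Fin n → stdSimplex ℝ κ) : SoftColoring ρ κ where
  toFun u := p (τ u)
  measurable_toFun := (Measurable.of_discrete (f := fun i => (p i : κ → ℝ))).comp hτ
  toFun_mem u := (p (τ u)).2

theorem setIntegral_mul_ofCells (hτ : Measurable τ) (p : Fin n → stdSimplex ℝ κ) (l : Ω → ℝ)
    (r : κ) (i : Fin n) :
    ∫ u in τ ⁻¹' {i}, l u * (ofCells hτ p : SoftColoring ρ κ) u r ∂ρ =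
      (∫ u in τ ⁻¹' {i}, l u ∂ρ) * p i r := by
  rw [← integral_mul_const]
  refine setIntegral_congr_fun (hτ (measurableSet_singleton i)) fun u hu => ?_
  rw [show ofCells hτ p u = (p i : κ → ℝ) by rw [← (hu : τ u = i)]; rfl]

theorem integral_mul_ofCells (hτ : Measurable τ) (p : Fin n → stdSimplex ℝ κ) {l : Ω → ℝ}
    (hl : Integrable l ρ) (r : κ) :
    ∫ u, l u * (ofCells hτ p : SoftColoring ρ κ) u r ∂ρ =
      ∑ i, (∫ u in τ ⁻¹' {i}, l u ∂ρ) * p i r := by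
  rw [integral_eq_sum_setIntegral_preimage hτ (hl.mul_bdd (c := 1)
    ((ofCells hτ p).measurable_apply r).aestronglyMeasurable
    (ae_of_all _ ((ofCells hτ p).abs_le_one r)))]
  exact Finset.sum_congr rfl fun i _ => setIntegral_mul_ofCells hτ p l r i

end SoftColoring

variable (hτ : IsEquipartition ρ τ)
include hτ

theorem IsEquipartition.measure_preimage_ne_zero (i : Fin n) : ρ (τ ⁻¹' {i}) ≠ 0 := fun h =>
  (inv_pos.2 (Nat.cast_pos.2 i.pos) : (0 : ℝ) < (n : ℝ)⁻¹).ne' <| by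
    rw [← hτ.measureReal_preimage i, Measure.real, h, ENNReal.toReal_zero]

namespace SoftColoring

theorem setIntegral_ofCells (p : Fin n → stdSimplex ℝ κ) (i : Fin n) (r : κ) :
    ∫ u in τ ⁻¹' {i}, (ofCells hτ.measurable p : SoftColoring ρ κ) u r ∂ρ =
      (n : ℝ)⁻¹ * p i r := by
  simpa only [one_mul, setIntegral_const, smul_eq_mul, mul_one, hτ.measureReal_preimage] using
    setIntegral_mul_ofCells (ρ := ρ) hτ.measurable p (fun _ => 1) r i

variable [IsFiniteMeasure ρ] (f : SoftColoring ρ κ)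

/-- The mean of a soft colouring over the `i`-th cell of an equipartition. -/
noncomputable def cellMean (i : Fin n) : stdSimplex ℝ κ :=
  ⟨⨍ u in τ ⁻¹' {i}, f u ∂ρ, (convex_stdSimplex ℝ κ).set_average_mem (isClosed_stdSimplex ℝ κ)
    (hτ.measure_preimage_ne_zero i) (measure_ne_top ρ _) (ae_of_all _ f.toFun_mem)
    (Integrable.of_eval fun r => (f.integrable r).integrableOn)⟩

theorem inv_mul_cellMean (i : Fin n) (r : κ) :
    (n : ℝ)⁻¹ * f.cellMean hτ i r = ∫ u in τ ⁻¹' {i}, f u r ∂ρ := by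
  rw [← eval_integral fun r => (f.integrable r).integrableOn, ← measure_smul_setAverage _
    (measure_ne_top ρ _), hτ.measureReal_preimage]
  rfl

/-- The conditional expectation of a soft colouring on the cells of an equipartition. -/
noncomputable def average : SoftColoring ρ κ := ofCells hτ.measurable (f.cellMean hτ)

theorem setIntegral_average (i : Fin n) (r : κ) :
    ∫ u in τ ⁻¹' {i}, f.average hτ u r ∂ρ = ∫ u in τ ⁻¹' {i}, f u r ∂ρ := by
  rw [average, setIntegral_ofCells hτ, inv_mul_cellMean]

end SoftColoring

end Averages

section MonoDensity

variable {Ω κ : Type*} [MeasurableSpace Ω] {ρ : Measure Ω} [Fintype κ] {v : ℕ}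
  (G : SimpleGraph (Fin v)) [DecidableRel G.Adj]

/-- The density of monochromatic copies of `G` in the kernel `U` under a soft colouring: the
functional `G_{2,W}` over a general base space. -/
noncomputable def monoDensity (U : Ω → Ω → ℝ) (f : SoftColoring ρ κ) : ℝ :=
  ∑ r, edgeIntegral G ρ (fun _ => U) fun x => ∏ a, f (x a) r

variable [IsProbabilityMeasure ρ]

theorem continuous_monoDensity {U : Ω → Ω → ℝ} (hU : Measurable (Function.uncurry U))
    (hUD : eLpNorm (Function.uncurry U) G.maxDegree (ρ.prod ρ) ≠ ⊤) :
    Continuous (monoDensity G U : SoftColoring ρ κ → ℝ) :=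
  continuous_finsetSum _ fun r _ => SoftColoring.continuous_integral_mul_prod r
    (integrable_prod_orderedEdges (fun _ => hU) fun _ => hUD)

theorem exists_cutNormLE_abs_monoDensity_sub_le (κ : Type*) [Fintype κ] (ρ : Measure Ω)
    [IsProbabilityMeasure ρ] {q : ℝ} (hq : 1 < q) (C : ℝ≥0) {ε : ℝ} (hε : 0 < ε) :
    ∃ δ > 0, ∀ U W : Ω → Ω → ℝ, Measurable (Function.uncurry U) →
      Measurable (Function.uncurry W) →
      eLpNorm (Function.uncurry U) (ENNReal.ofReal q * G.maxDegree) (ρ.prod ρ) ≤ C →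
      eLpNorm (Function.uncurry W) (ENNReal.ofReal q * G.maxDegree) (ρ.prod ρ) ≤ C →
      CutNormLE ρ (Function.uncurry fun x y => U x y - W x y) δ →
      ∀ f : SoftColoring ρ κ, |monoDensity G U f - monoDensity G W f| ≤ ε := by
  have hη : 0 < ε / (Fintype.card κ + 1) := by positivity
  obtain ⟨δ, hδ, h⟩ := exists_cutNormLE_abs_edgeIntegral_sub_le G ρ hq C hη
  refine ⟨δ, hδ, fun U W hU hW hUC hWC hcut f => ?_⟩
  rw [monoDensity, monoDensity, ← Finset.sum_sub_distrib]
  calc |∑ r, (edgeIntegral G ρ (fun _ => U) (fun x => ∏ a, f (x a) r) -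
        edgeIntegral G ρ (fun _ => W) fun x => ∏ a, f (x a) r)|
      ≤ ∑ _ : κ, ε / (Fintype.card κ + 1) :=
        (Finset.abs_sum_le_sum_abs _ _).trans (Finset.sum_le_sum fun r _ =>
          h U W hU hW hUC hWC hcut _ (f.measurable_apply r) (f.abs_le_one r))
    _ = ε * (Fintype.card κ / (Fintype.card κ + 1)) := by
        rw [Finset.sum_const, Finset.card_univ, nsmul_eq_mul]
        ring
    _ ≤ ε := mul_le_of_le_one_right hε.le (div_le_one_of_le₀ (by linarith) (by positivity))

theorem monoDensity_comp {n : ℕ} {τ : Ω → Fin n} (hτ : Measurable τ) (Q : Fin n → Fin n → ℝ)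
    (f : SoftColoring ρ κ) :
    monoDensity G (fun x y => Q (τ x) (τ y)) f = ∑ r, ∑ i : Fin v → Fin n,
      (edgeProd G fun a b => Q (i a) (i b)) * ∏ a, ∫ u in τ ⁻¹' {i a}, f u r ∂ρ :=
  Finset.sum_congr rfl fun r _ => integral_comp_mul_prod hτ
    (fun i => edgeProd G fun a b => Q (i a) (i b)) (f.integrable r)

theorem monoDensity_average {n : ℕ} {τ : Ω → Fin n} (hτ : IsEquipartition ρ τ)
    (Q : Fin n → Fin n → ℝ) (f : SoftColoring ρ κ) :
    monoDensity G (fun x y => Q (τ x) (τ y)) (f.average hτ) =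
      monoDensity G (fun x y => Q (τ x) (τ y)) f := by
  simp only [monoDensity_comp G hτ.measurable, f.setIntegral_average hτ]

/-- The soft colouring of the cells of `τ` by the colours `x`. -/
noncomputable def SoftColoring.ofColors {κ : Type*} [Fintype κ] [DecidableEq κ] {n : ℕ}
    {τ : Ω → Fin n} (hτ : Measurable τ) (x : Fin n → κ) : SoftColoring ρ κ :=
  ofCells hτ fun i => stdSimplex.vertex (x i)

theorem sum_prod_single_eq_monoPhi {c : ℕ} (hv : v ≠ 0) (y : Fin v → Fin c) :
    ∑ r, ∏ a, (Pi.single (y a) 1 : Fin c → ℝ) r = monoPhi c v y := by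
  have : NeZero v := ⟨hv⟩
  have hprod : ∀ r, ∏ a, (Pi.single (y a) 1 : Fin c → ℝ) r =
      if r = y 0 then monoPhi c v y else 0 := fun r => by
    simp only [Pi.single_apply, Finset.prod_boole, Finset.mem_univ, true_implies, monoPhi]
    grind
  simp only [hprod, Finset.sum_ite_eq', Finset.mem_univ, if_true]

theorem monoDensity_ofColors {c n : ℕ} (hv : v ≠ 0) {τ : Ω → Fin n} (hτ : IsEquipartition ρ τ)
    (Q : Fin n → Fin n → ℝ) (x : Fin n → Fin c) :
    monoDensity G (fun x y => Q (τ x) (τ y)) (.ofColors hτ.measurable x : SoftColoring ρ (Fin c)) =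
      Vstat G (monoPhi c v) n Q x := by
  have hcell : ∀ i r, ∫ u in τ ⁻¹' {i},
      (SoftColoring.ofColors hτ.measurable x : SoftColoring ρ (Fin c)) u r ∂ρ =
        (n : ℝ)⁻¹ * (Pi.single (x i) 1 : Fin c → ℝ) r :=
    SoftColoring.setIntegral_ofCells hτ _
  rw [monoDensity_comp G hτ.measurable, Finset.sum_comm, Vstat, Finset.sum_div]
  refine Finset.sum_congr rfl fun i _ => ?_
  simp only [hcell, Finset.prod_mul_distrib, Finset.prod_const, Finset.card_univ, Fintype.card_fin]
  rw [← Finset.mul_sum, ← Finset.mul_sum, ← sum_prod_single_eq_monoPhi hv]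
  simp only [Function.comp_apply]
  ring

end MonoDensity

/-! ### Large deviation bounds -/

section Chernoff

variable {Ω κ : Type*} [MeasurableSpace Ω] {ρ : Measure Ω} [IsFiniteMeasure ρ] [Fintype κ]
  {m : κ → ℝ} {l : Ω → κ → ℝ}

theorem IsTilt.sum_mul_exp_setAverage_le_one (hm : ∀ r, 0 ≤ m r) (hl : IsTilt m l) {A : Set Ω}
    (hA : ρ A ≠ 0) : ∑ r, m r * Real.exp ((⨍ u in A, l u ∂ρ) r) ≤ 1 := by
  have hconv : ConvexOn ℝ univ fun p : κ → ℝ => ∑ r, m r * Real.exp (p r) := by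
    refine ⟨convex_univ, fun p _ q _ a b ha hb hab => ?_⟩
    simp only [smul_eq_mul, Finset.mul_sum, ← Finset.sum_add_distrib]
    refine Finset.sum_le_sum fun r _ => ?_
    have h := convexOn_exp.2 (mem_univ (p r)) (mem_univ (q r)) ha hb hab
    simp only [smul_eq_mul] at h
    simp only [Pi.add_apply, Pi.smul_apply, smul_eq_mul]
    linarith [mul_le_mul_of_nonneg_left h (hm r)]
  have hmem := (hconv.convex_le 1).set_average_mem
    (by simpa using isClosed_le (by fun_prop) continuous_const) hA (measure_ne_top ρ A)
    (ae_of_all _ fun u => ⟨mem_univ _, hl.sum_mul_exp_le_one u⟩)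
    (Integrable.of_eval fun r => (hl.integrable r).integrableOn)
  exact hmem.2

namespace SoftColoring

variable [DecidableEq κ] {n : ℕ} {τ : Ω → Fin n} (hτ : IsEquipartition ρ τ)

theorem pairing_ofColors (hl : IsTilt m l) (x : Fin n → κ) :
    pairing l (.ofColors hτ.measurable x : SoftColoring ρ κ) =
      ∑ i, (n : ℝ)⁻¹ * (⨍ u in τ ⁻¹' {i}, l u ∂ρ) (x i) := by
  have hcell : ∀ i r, (n : ℝ)⁻¹ * (⨍ u in τ ⁻¹' {i}, l u ∂ρ) r = ∫ u in τ ⁻¹' {i}, l u r ∂ρ :=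
    fun i r => by
      rw [← eval_integral fun r => (hl.integrable r).integrableOn, ← measure_smul_setAverage _
        (measure_ne_top ρ _), hτ.measureReal_preimage]
      rfl
  simp only [pairing, ofColors, hcell]
  rw [integral_finsetSum _ fun r _ => hl.integrable_mul _ r]
  rw [Finset.sum_congr rfl fun r _ => integral_mul_ofCells hτ.measurable
    (fun i => stdSimplex.vertex (x i)) (hl.integrable r) r, Finset.sum_comm]
  refine Finset.sum_congr rfl fun i _ => ?_
  simp [stdSimplex.vertex, Pi.single_apply]

variable [MeasurableSpace κ] [DiscreteMeasurableSpace κ] {μ : Measure κ} [IsProbabilityMeasure μ]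

theorem measureReal_lt_pairing_ofColors_le (hl : IsTilt (fun r => μ.real {r}) l) (a : ℝ) :
    (Measure.pi fun _ : Fin n => μ).real
      {x | a < pairing l (.ofColors hτ.measurable x : SoftColoring ρ κ)} ≤
        Real.exp (-(n * a)) := by
  set L : Fin n → κ → ℝ := fun i => ⨍ u in τ ⁻¹' {i}, l u ∂ρ
  have hmgf : ProbabilityTheory.mgf (fun x : Fin n → κ => ∑ i, (n : ℝ)⁻¹ * L i (x i))
      (Measure.pi fun _ => μ) n = ∏ i, ∑ r, μ.real {r} * Real.exp (L i r) := by
    have hexp : ∀ x : Fin n → κ, Real.exp (n * ∑ i, (n : ℝ)⁻¹ * L i (x i)) =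
        ∏ i, Real.exp (L i (x i)) := fun x => by
      rw [← Real.exp_sum, Finset.mul_sum]
      exact congrArg _ (Finset.sum_congr rfl fun i _ =>
        mul_inv_cancel_left₀ (Nat.cast_ne_zero.2 i.pos.ne') _)
    simp only [ProbabilityTheory.mgf, hexp]
    rw [integral_fintype_prod_eq_prod (𝕜 := ℝ) fun i r => Real.exp (L i r)]
    simp only [integral_fintype (Integrable.of_finite), smul_eq_mul]
  simp only [pairing_ofColors hτ hl]
  calc (Measure.pi fun _ : Fin n => μ).real {x | a < ∑ i, (n : ℝ)⁻¹ * L i (x i)}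
      ≤ (Measure.pi fun _ : Fin n => μ).real {x | a ≤ ∑ i, (n : ℝ)⁻¹ * L i (x i)} :=
        measureReal_mono fun x hx => le_of_lt (mem_ofPred_eq ▸ hx)
    _ ≤ Real.exp (-n * a) * ∏ i, ∑ r, μ.real {r} * Real.exp (L i r) :=
        hmgf ▸ ProbabilityTheory.measure_ge_le_exp_mul_mgf a n.cast_nonneg .of_finite
    _ ≤ Real.exp (-(n * a)) * 1 := by
        rw [neg_mul]
        refine mul_le_mul_of_nonneg_left (Finset.prod_le_one (fun i _ => Finset.sum_nonneg
          fun r _ => mul_nonneg measureReal_nonneg (Real.exp_pos _).le) fun i _ =>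
            hl.sum_mul_exp_setAverage_le_one (fun _ => measureReal_nonneg)
              (hτ.measure_preimage_ne_zero i)) (Real.exp_pos _).le
    _ = _ := mul_one _

end SoftColoring

end Chernoff

section UpperBound

variable {Ω κ : Type*} [MeasurableSpace Ω] {ρ : Measure Ω} [IsProbabilityMeasure ρ] [Fintype κ]
  [DecidableEq κ] [MeasurableSpace κ] [DiscreteMeasurableSpace κ] {μ : Measure κ}
  [IsProbabilityMeasure μ]

omit [DecidableEq κ] in
theorem measureReal_singleton_mem_stdSimplex (μ : Measure κ) [IsProbabilityMeasure μ] :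
    (fun r => μ.real {r}) ∈ stdSimplex ℝ κ :=
  ⟨fun _ => measureReal_nonneg, by simp⟩

theorem exists_measureReal_ofColors_mem_le (hpos : ∀ r, 0 < μ.real {r})
    {D : Set (SoftColoring ρ κ)} (hD : IsClosed D) {a : ℝ}
    (ha : ∀ f ∈ D, a < f.entropy fun r => μ.real {r}) :
    ∃ N : ℕ, ∀ {n : ℕ} {τ : Ω → Fin n} (hτ : IsEquipartition ρ τ),
      (Measure.pi fun _ : Fin n => μ).real {x | .ofColors hτ.measurable x ∈ D} ≤
        N * Real.exp (-(n * a)) := by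
  choose! l hl hlf using fun f hf => SoftColoring.exists_isTilt_lt_pairing hpos
    (measureReal_singleton_mem_stdSimplex μ) (ha f hf)
  obtain ⟨t, htD, ht⟩ := hD.isCompact.elim_nhds_subcover
    (fun f => {g | a < SoftColoring.pairing (l f) g}) fun f hf =>
      (isOpen_lt continuous_const (SoftColoring.continuous_pairing (hl f hf))).mem_nhds (hlf f hf)
  refine ⟨t.card, fun {n τ} hτ => ?_⟩
  calc (Measure.pi fun _ : Fin n => μ).real {x | .ofColors hτ.measurable x ∈ D}
      ≤ (Measure.pi fun _ : Fin n => μ).real (⋃ f ∈ t, {x | a < SoftColoring.pairing (l f)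
          (.ofColors hτ.measurable x : SoftColoring ρ κ)}) :=
        measureReal_mono (fun x hx => let ⟨f, hf, hxf⟩ := mem_iUnion₂.1 (ht hx)
          mem_iUnion₂.2 ⟨f, hf, hxf⟩) (measure_ne_top _ _)
    _ ≤ ∑ f ∈ t, (Measure.pi fun _ : Fin n => μ).real {x | a < SoftColoring.pairing (l f)
          (.ofColors hτ.measurable x : SoftColoring ρ κ)} := measureReal_biUnion_finset_le _ _
    _ ≤ ∑ _ ∈ t, Real.exp (-(n * a)) := Finset.sum_le_sum fun f hf =>
        SoftColoring.measureReal_lt_pairing_ofColors_le hτ (hl f (htD f hf)) a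
    _ = t.card * Real.exp (-(n * a)) := by rw [Finset.sum_const, nsmul_eq_mul]

end UpperBound

section ChangeOfMeasure

variable {ι : Type*} [Fintype ι] [MeasurableSpace ι] [DiscreteMeasurableSpace ι] {μ ν : Measure ι}
  [IsProbabilityMeasure μ] [IsProbabilityMeasure ν]

omit [Fintype ι] in
theorem integral_exp_indicator_neg_log_sub_log_two_le_one [Finite ι] {B : Set ι}
    (hB : 0 < μ.real B) :
    ∫ x, Real.exp (B.indicator (fun _ => -Real.log (μ.real B)) x - Real.log 2) ∂μ ≤ 1 := by
  have hexp : ∀ x, Real.exp (B.indicator (fun _ => -Real.log (μ.real B)) x - Real.log 2) ≤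
      B.indicator (fun _ => (μ.real B)⁻¹) x / 2 + 1 / 2 := fun x => by
    rw [Real.exp_sub, Real.exp_log two_pos, ← add_div]
    gcongr
    by_cases hx : x ∈ B
    · rw [indicator_of_mem hx, indicator_of_mem hx, Real.exp_neg, Real.exp_log hB]
      exact le_add_of_nonneg_right zero_le_one
    · rw [indicator_of_notMem hx, indicator_of_notMem hx, Real.exp_zero, zero_add]
  calc _ ≤ ∫ x, (B.indicator (fun _ => (μ.real B)⁻¹) x / 2 + 1 / 2) ∂μ :=
        integral_mono .of_finite .of_finite hexp
    _ = 1 := by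
        rw [integral_add .of_finite .of_finite, integral_div,
          integral_indicator_const _ .of_discrete, smul_eq_mul, mul_inv_cancel₀ hB.ne',
          integral_const, probReal_univ, one_smul, add_halves]

/-- Test the dual formula for the entropy against a multiple of the indicator of `B`. -/
theorem exp_neg_div_le_measureReal (hpos : ∀ x, 0 < μ.real {x}) {B : Set ι} (hB : 0 < ν.real B) :
    Real.exp (-((simplexEntropy (fun x => μ.real {x}) (fun x => ν.real {x}) + Real.log 2) /
      ν.real B)) ≤ μ.real B := by
  obtain ⟨x, hx⟩ : B.Nonempty := nonempty_of_measureReal_ne_zero hB.ne'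
  have hμB : 0 < μ.real B :=
    (hpos x).trans_le (measureReal_mono (singleton_subset_iff.2 hx) (measure_ne_top _ _))
  set l : ι → ℝ := fun x => B.indicator (fun _ => -Real.log (μ.real B)) x - Real.log 2
  have hl : ∑ x, μ.real {x} * Real.exp (l x) ≤ 1 := by
    simpa only [integral_fintype Integrable.of_finite, smul_eq_mul] using
      integral_exp_indicator_neg_log_sub_log_two_le_one hμB
  have hsum : ∑ x, l x * ν.real {x} = -(ν.real B * Real.log (μ.real B)) - Real.log 2 :=
    calc ∑ x, l x * ν.real {x}
        = ∫ x, l x ∂ν := by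
          simp only [integral_fintype Integrable.of_finite, smul_eq_mul, mul_comm]
      _ = _ := by
          rw [integral_sub .of_finite .of_finite, integral_indicator_const _ .of_discrete,
            integral_const, probReal_univ, one_smul, smul_eq_mul, mul_neg]
  have h := sum_mul_le_simplexEntropy hpos (measureReal_singleton_mem_stdSimplex ν) hl
  rw [← Real.le_log_iff_exp_le hμB, ← neg_div, div_le_iff₀ hB]
  linarith

omit [MeasurableSpace ι] [DiscreteMeasurableSpace ι] in
theorem simplexEntropy_pi [DecidableEq ι] {κ : Type*} [Fintype κ] [MeasurableSpace κ]
    [DiscreteMeasurableSpace κ] {μ ν : ι → Measure κ} [∀ i, IsProbabilityMeasure (μ i)]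
    [∀ i, IsProbabilityMeasure (ν i)] (hpos : ∀ i r, 0 < (μ i).real {r}) :
    simplexEntropy (fun x => (Measure.pi μ).real {x}) (fun x => (Measure.pi ν).real {x}) =
      ∑ i, simplexEntropy (fun r => (μ i).real {r}) (fun r => (ν i).real {r}) := by
  have hsingle : ∀ (π : ι → Measure κ) [∀ i, IsProbabilityMeasure (π i)] (x : ι → κ),
      (Measure.pi π).real {x} = ∏ i, (π i).real {x i} := fun π _ x => by
    simp only [Measure.real, Measure.pi_singleton, ENNReal.toReal_prod]
  have hlog : ∀ x, (Measure.pi ν).real {x} *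
      Real.log ((Measure.pi ν).real {x} / (Measure.pi μ).real {x}) =
        (Measure.pi ν).real {x} * ∑ i, Real.log ((ν i).real {x i} / (μ i).real {x i}) := fun x => by
    obtain h0 | h0 := eq_or_ne ((Measure.pi ν).real {x}) 0
    · rw [h0, zero_mul, zero_mul]
    · rw [hsingle ν] at h0 ⊢
      rw [hsingle μ, ← Finset.prod_div_distrib, Real.log_prod fun i hi =>
        div_ne_zero (Finset.prod_ne_zero_iff.1 h0 i hi) (hpos i _).ne']
  simp only [simplexEntropy, hlog]
  calc _ = ∫ x, ∑ i, Real.log ((ν i).real {x i} / (μ i).real {x i}) ∂Measure.pi ν := by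
        simp only [integral_fintype Integrable.of_finite, smul_eq_mul]
    _ = ∑ i, ∫ r, Real.log ((ν i).real {r} / (μ i).real {r}) ∂ν i := by
        rw [integral_finsetSum _ fun i _ => .of_finite]
        exact Finset.sum_congr rfl fun i _ => integral_comp_eval
          (X := fun _ => κ) (f := fun r => Real.log ((ν i).real {r} / (μ i).real {r})) .of_discrete
    _ = _ := by simp only [integral_fintype Integrable.of_finite, smul_eq_mul]

end ChangeOfMeasure

section Concentration

variable {κ : Type*} [Fintype κ] [MeasurableSpace κ]

/-- The probability measure on `κ` with the given vector of weights. -/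
noncomputable def simplexMeasure (p : stdSimplex ℝ κ) : Measure κ :=
  ∑ r, ENNReal.ofReal (p r) • Measure.dirac r

variable [DiscreteMeasurableSpace κ]

theorem measureReal_simplexMeasure_singleton (p : stdSimplex ℝ κ) (r : κ) :
    (simplexMeasure p).real {r} = p r := by
  classical
  simp [simplexMeasure, Measure.real, Measure.finsetSum_apply, Set.indicator_apply]

instance (p : stdSimplex ℝ κ) : IsProbabilityMeasure (simplexMeasure p) := ⟨by
  simp only [simplexMeasure, Measure.finsetSum_apply, Measure.smul_apply, measure_univ,
    smul_eq_mul, mul_one]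
  rw [← ENNReal.ofReal_sum_of_nonneg fun r _ => stdSimplex.zero_le p r]
  exact ENNReal.ofReal_eq_one.2 (stdSimplex.sum_eq_one p)⟩

theorem measureReal_pi_le_abs_sum_single_sub_le [DecidableEq κ] {n : ℕ}
    (p : Fin n → stdSimplex ℝ κ) {w : Fin n → ℝ} (hw : ∀ i, |w i| ≤ (n : ℝ)⁻¹) (r : κ) {δ : ℝ}
    (hδ : 0 < δ) :
    (Measure.pi fun i => simplexMeasure (p i)).real
      {x | δ ≤ |∑ i, w i * (Pi.single (x i) 1 : κ → ℝ) r - ∑ i, w i * p i r|} ≤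
        (n : ℝ)⁻¹ / δ ^ 2 := by
  set X : Fin n → κ → ℝ := fun i s => w i * (Pi.single s 1 : κ → ℝ) r
  set P := Measure.pi fun i => simplexMeasure (p i)
  have hmean : ∫ x, (∑ i, fun x : Fin n → κ => X i (x i)) x ∂P = ∑ i, w i * p i r := by
    simp only [Finset.sum_apply]
    rw [integral_finsetSum _ fun i _ => .of_finite]
    refine Finset.sum_congr rfl fun i _ => ?_
    rw [integral_comp_eval (X := fun _ => κ) (f := X i) .of_discrete, integral_fintype .of_finite]
    simp [X, measureReal_simplexMeasure_singleton, Pi.single_apply, mul_comm]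
  have hvar : ProbabilityTheory.variance (∑ i, fun x : Fin n → κ => X i (x i)) P ≤ (n : ℝ)⁻¹ := by
    rw [ProbabilityTheory.variance_sum_pi fun i => .of_discrete]
    have hX : ∀ i s, |X i s| ≤ (n : ℝ)⁻¹ := fun i s => by
      have hs := mem_Icc_of_mem_stdSimplex (single_mem_stdSimplex ℝ s) r
      rw [abs_mul, abs_of_nonneg hs.1]
      exact (mul_le_of_le_one_right (abs_nonneg _) hs.2).trans (hw i)
    calc _ ≤ ∑ i : Fin n, ((n : ℝ)⁻¹) ^ 2 := Finset.sum_le_sum fun i _ => ?_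
      _ = (n : ℝ)⁻¹ := by
        rw [Finset.sum_const, Finset.card_univ, Fintype.card_fin, nsmul_eq_mul, sq, ← mul_inv,
          ← div_eq_mul_inv, div_self_mul_self']
    calc _ ≤ ∫ s, (X i s) ^ 2 ∂simplexMeasure (p i) :=
          ProbabilityTheory.variance_le_expectation_sq .of_discrete
      _ ≤ ∫ _, ((n : ℝ)⁻¹) ^ 2 ∂simplexMeasure (p i) :=
          integral_mono .of_finite .of_finite fun s =>
            sq_le_sq' (abs_le.1 (hX i s)).1 (abs_le.1 (hX i s)).2
      _ = _ := by rw [integral_const, probReal_univ, one_smul]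
  have hcheb := ProbabilityTheory.meas_ge_le_variance_div_sq (μ := P)
    (X := ∑ i, fun x : Fin n → κ => X i (x i)) .of_discrete hδ
  rw [hmean] at hcheb
  simp only [Finset.sum_apply] at hcheb
  exact ENNReal.toReal_le_of_le_ofReal (by positivity)
    (hcheb.trans (ENNReal.ofReal_le_ofReal (by gcongr)))

end Concentration

section LowerBound

namespace SoftColoring

variable {Ω κ : Type*} [MeasurableSpace Ω] {ρ : Measure Ω} [Fintype κ] {n : ℕ} {τ : Ω → Fin n}

theorem sum_simplexEntropy_cellMean_le [IsFiniteMeasure ρ] {m : κ → ℝ} (hpos : ∀ r, 0 < m r)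
    (hτ : IsEquipartition ρ τ) (f : SoftColoring ρ κ) :
    ∑ i, simplexEntropy m (f.cellMean hτ i) ≤ n * f.entropy m := by
  have hint := f.integrable_simplexEntropy hpos
  rw [entropy, integral_eq_sum_setIntegral_preimage hτ.measurable hint, Finset.mul_sum]
  refine Finset.sum_le_sum fun i _ => ?_
  have hjensen := (convexOn_simplexEntropy hpos).map_set_average_le
    (continuous_simplexEntropy hpos).continuousOn (isClosed_stdSimplex ℝ κ)
    (hτ.measure_preimage_ne_zero i) (measure_ne_top ρ _) (ae_of_all _ f.toFun_mem)
    (Integrable.of_eval fun r => (f.integrable r).integrableOn) hint.integrableOn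
  rw [setAverage_eq _ fun u => simplexEntropy m (f u), hτ.measureReal_preimage, inv_inv,
    smul_eq_mul] at hjensen
  exact hjensen

theorem exists_abs_setIntegrals_sub_lt_imp_dist_lt [IsFiniteMeasure ρ] {E : Type*}
    [PseudoMetricSpace E] {Φ : SoftColoring ρ κ → E} (hΦ : Continuous Φ) {ε : ℝ} (hε : 0 < ε) :
    ∃ (s : Finset ({A : Set Ω // MeasurableSet A} × κ)) (δ : _ → ℝ), (∀ p ∈ s, 0 < δ p) ∧
      ∀ f g : SoftColoring ρ κ, (∀ p ∈ s, |f.setIntegrals p - g.setIntegrals p| < δ p) →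
        dist (Φ f) (Φ g) < ε := by
  have hunif := CompactSpace.uniformContinuous_of_continuous hΦ (Metric.dist_mem_uniformity hε)
  have hbasis := (HasBasis.iInf' fun p : {A : Set Ω // MeasurableSet A} × κ =>
    Metric.uniformity_basis_dist.comap fun z : (_ → ℝ) × (_ → ℝ) => (z.1 p, z.2 p)).comap
      (Prod.map setIntegrals setIntegrals : SoftColoring ρ κ × SoftColoring ρ κ → _)
  rw [← Pi.uniformity] at hbasis
  obtain ⟨⟨s, δ⟩, ⟨hs, hδ⟩, hsub⟩ := hbasis.mem_iff.1 hunif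
  exact ⟨hs.toFinset, δ, fun p hp => hδ p (hs.mem_toFinset.1 hp), fun f g h =>
    @hsub (f, g) (mem_iInter₂.2 fun p hp => h p (hs.mem_toFinset.2 hp))⟩

variable [IsProbabilityMeasure ρ] [DecidableEq κ] [MeasurableSpace κ] [DiscreteMeasurableSpace κ]

theorem measureReal_pi_le_abs_setIntegrals_ofColors_sub_le (hτ : IsEquipartition ρ τ)
    (p : Fin n → stdSimplex ℝ κ) (k : {A : Set Ω // MeasurableSet A} × κ) {δ : ℝ} (hδ : 0 < δ) :
    (Measure.pi fun i => simplexMeasure (p i)).real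
      {x | δ ≤ |(ofColors hτ.measurable x : SoftColoring ρ κ).setIntegrals k -
        (ofCells hτ.measurable p : SoftColoring ρ κ).setIntegrals k|} ≤ (n : ℝ)⁻¹ / δ ^ 2 := by
  obtain ⟨⟨A, hA⟩, r⟩ := k
  have hcells : ∀ p : Fin n → stdSimplex ℝ κ,
      (ofCells hτ.measurable p : SoftColoring ρ κ).setIntegrals (⟨A, hA⟩, r) =
        ∑ i, ρ.real (τ ⁻¹' {i} ∩ A) * p i r := fun p => by
    have h := integral_mul_ofCells (ρ := ρ) hτ.measurable p
      ((integrable_const (1 : ℝ)).indicator hA) r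
    simp only [setIntegral_indicator hA, setIntegral_const, smul_eq_mul, mul_one] at h
    rw [setIntegrals, ← integral_indicator hA, ← h]
    exact integral_congr_ae (ae_of_all _ fun u => by
      simpa only [one_mul] using indicator_mul_left A (fun _ => (1 : ℝ)) fun u => ofCells _ p u r)
  simp only [ofColors, hcells]
  exact measureReal_pi_le_abs_sum_single_sub_le p (fun i => by
    rw [abs_of_nonneg measureReal_nonneg, ← hτ.measureReal_preimage i]
    exact measureReal_mono inter_subset_left) r hδ

theorem exists_measureReal_pi_cellMean_le {E : Type*} [PseudoMetricSpace E]
    {Φ : SoftColoring ρ κ → E} (hΦ : Continuous Φ) {ε : ℝ} (hε : 0 < ε) :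
    ∃ K : ℝ, ∀ {n : ℕ} {τ : Ω → Fin n} (hτ : IsEquipartition ρ τ) (f : SoftColoring ρ κ),
      (Measure.pi fun i => simplexMeasure (f.cellMean hτ i)).real
        {x | ε ≤ dist (Φ (ofColors hτ.measurable x)) (Φ (f.average hτ))} ≤ K * (n : ℝ)⁻¹ := by
  obtain ⟨s, δ, hδ, hs⟩ := exists_abs_setIntegrals_sub_lt_imp_dist_lt hΦ hε
  refine ⟨∑ k ∈ s, (δ k ^ 2)⁻¹, fun {n τ} hτ f => ?_⟩
  set bad := fun k => {x : Fin n → κ | δ k ≤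
    |(ofColors hτ.measurable x : SoftColoring ρ κ).setIntegrals k -
      (f.average hτ).setIntegrals k|}
  have hsub : {x | ε ≤ dist (Φ (ofColors hτ.measurable x)) (Φ (f.average hτ))} ⊆
      ⋃ k ∈ s, bad k := fun x hx => by
    by_contra hbad
    simp only [mem_iUnion₂, not_exists] at hbad
    exact (hs _ _ fun k hk => not_le.1 (hbad k hk)).not_ge hx
  calc _ ≤ (Measure.pi fun i => simplexMeasure (f.cellMean hτ i)).real (⋃ k ∈ s, bad k) :=
        measureReal_mono hsub (measure_ne_top _ _)
    _ ≤ ∑ k ∈ s, (Measure.pi fun i => simplexMeasure (f.cellMean hτ i)).real (bad k) :=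
        measureReal_biUnion_finset_le _ _
    _ ≤ ∑ k ∈ s, (n : ℝ)⁻¹ / δ k ^ 2 := Finset.sum_le_sum fun k hk =>
        measureReal_pi_le_abs_setIntegrals_ofColors_sub_le hτ _ k (hδ k hk)
    _ = _ := by
        rw [Finset.sum_mul]
        exact Finset.sum_congr rfl fun k _ => div_eq_inv_mul _ _

omit [DecidableEq κ] in
theorem exp_neg_div_le_measureReal_pi {μ : Measure κ} [IsProbabilityMeasure μ]
    (hpos : ∀ r, 0 < μ.real {r}) (hτ : IsEquipartition ρ τ) (f : SoftColoring ρ κ)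
    {B : Set (Fin n → κ)}
    (hB : 0 < (Measure.pi fun i => simplexMeasure (f.cellMean hτ i)).real B) :
    Real.exp (-((n * f.entropy (fun r => μ.real {r}) + Real.log 2) /
      (Measure.pi fun i => simplexMeasure (f.cellMean hτ i)).real B)) ≤
        (Measure.pi fun _ : Fin n => μ).real B := by
  have hsingle : ∀ x, 0 < (Measure.pi fun _ : Fin n => μ).real {x} := fun x => by
    simp only [Measure.real, Measure.pi_singleton, ENNReal.toReal_prod]
    exact Finset.prod_pos fun i _ => hpos (x i)
  refine le_trans ?_ (exp_neg_div_le_measureReal hsingle hB)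
  have hent := sum_simplexEntropy_cellMean_le hpos hτ f
  rw [simplexEntropy_pi fun _ => hpos]
  simp only [measureReal_simplexMeasure_singleton]
  gcongr

theorem eventually_exp_neg_mul_le_measureReal {μ : Measure κ} [IsProbabilityMeasure μ]
    (hpos : ∀ r, 0 < μ.real {r}) {E : Type*} [PseudoMetricSpace E] {Φ : SoftColoring ρ κ → E}
    (hΦ : Continuous Φ) {f : SoftColoring ρ κ} {a : ℝ}
    (ha : f.entropy (fun r => μ.real {r}) < a) {ε : ℝ} (hε : 0 < ε) :
    ∀ᶠ n : ℕ in atTop, ∀ (τ : Ω → Fin n) (hτ : IsEquipartition ρ τ) (B : Set (Fin n → κ)),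
      (∀ x, dist (Φ (ofColors hτ.measurable x)) (Φ (f.average hτ)) < ε → x ∈ B) →
        Real.exp (-(n * a)) ≤ (Measure.pi fun _ : Fin n => μ).real B := by
  obtain ⟨K, hK⟩ := exists_measureReal_pi_cellMean_le hΦ hε
  have ha0 : 0 < a := (entropy_nonneg hpos (measureReal_singleton_mem_stdSimplex μ) f).trans_lt ha
  have hlarge : ∀ᶠ n : ℕ in atTop,
      Real.log 2 + K * a ≤ n * (a - f.entropy fun r => μ.real {r}) :=
    (tendsto_natCast_atTop_atTop.atTop_mul_const (sub_pos.2 ha)).eventually_ge_atTop _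
  have hKn : ∀ᶠ n : ℕ in atTop, K < n := tendsto_natCast_atTop_atTop.eventually_gt_atTop K
  filter_upwards [hlarge, hKn, eventually_gt_atTop 0] with n hn hKn hn0 τ hτ B hB
  have hn0 : (0 : ℝ) < n := Nat.cast_pos.2 hn0
  have hPB : 1 - K * (n : ℝ)⁻¹ ≤
      (Measure.pi fun i => simplexMeasure (f.cellMean hτ i)).real B := by
    rw [sub_le_comm, ← probReal_compl_eq_one_sub .of_discrete]
    exact (measureReal_mono (fun x hx => not_lt.1 (mt (hB x) hx)) (measure_ne_top _ _)).trans
      (hK hτ f)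
  have hpos' : 0 < 1 - K * (n : ℝ)⁻¹ := by
    rwa [sub_pos, ← div_eq_mul_inv, div_lt_one hn0]
  refine le_trans ?_ (exp_neg_div_le_measureReal_pi hpos hτ f (hpos'.trans_le hPB))
  rw [Real.exp_le_exp, neg_le_neg_iff, div_le_iff₀ (hpos'.trans_le hPB)]
  calc n * f.entropy (fun r => μ.real {r}) + Real.log 2 ≤ n * a - K * a := by linarith
    _ = n * a * (1 - K * (n : ℝ)⁻¹) := by field_simp
    _ ≤ _ := by gcongr

end SoftColoring

end LowerBound

section LargeDeviations

theorem inv_mul_log_ofReal_exp_neg {n : ℕ} (hn : n ≠ 0) (a : ℝ) :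
    (((n : ℝ)⁻¹ : ℝ) : EReal) * ENNReal.log (ENNReal.ofReal (Real.exp (-(n * a)))) =
      -(a : EReal) := by
  rw [ENNReal.log_ofReal_of_pos (Real.exp_pos _), Real.log_exp, ← EReal.coe_mul, mul_neg,
    inv_mul_cancel_left₀ (Nat.cast_ne_zero.2 hn), EReal.coe_neg]

theorem monotone_inv_mul_log (n : ℕ) :
    Monotone fun p => (((n : ℝ)⁻¹ : ℝ) : EReal) * ENNReal.log p := fun _ _ h =>
  mul_le_mul_of_nonneg_left (ENNReal.log_monotone h)
    (EReal.coe_nonneg.2 (inv_nonneg.2 n.cast_nonneg))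

theorem satisfiesLDP_of_forall_isOpen_of_forall_isClosed {E : Type*} [TopologicalSpace E]
    {Ω : ℕ → Type*} [∀ n, MeasurableSpace (Ω n)] {P : ∀ n, Measure (Ω n)}
    [∀ n, IsFiniteMeasure (P n)] {T : ∀ n, Ω n → E} {I : E → ℝ≥0∞}
    (hgood : ∀ c : ℝ≥0∞, c ≠ ⊤ → IsCompact {t | I t ≤ c})
    (hlower : ∀ U, IsOpen U → ∀ t ∈ U, ∀ a : ℝ, (I t : EReal) < a →
      ∀ᶠ n : ℕ in atTop, Real.exp (-(n * a)) ≤ (P n).real {ω | T n ω ∈ U})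
    (hupper : ∀ C, IsClosed C → ∀ a : ℝ, (∀ t ∈ C, (a : EReal) < I t) →
      ∃ N : ℕ, ∀ᶠ n : ℕ in atTop, (P n).real {ω | T n ω ∈ C} ≤ N * Real.exp (-(n * a))) :
    SatisfiesLDP P T I := by
  refine ⟨hgood, fun F _ => ⟨?_, ?_⟩⟩
  · rw [EReal.neg_le]
    refine le_iInf₂ fun t ht => EReal.le_of_forall_lt_iff_le.1 fun a ha => ?_
    rw [EReal.neg_le]
    refine le_liminf_of_le (by isBoundedDefault) ?_
    filter_upwards [hlower _ isOpen_interior t ht a ha, eventually_ne_atTop 0] with n hn hn0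
    rw [← inv_mul_log_ofReal_exp_neg hn0]
    refine monotone_inv_mul_log n ((ENNReal.ofReal_le_of_le_toReal hn).trans ?_)
    exact measure_mono fun ω (hω : T n ω ∈ interior F) => (interior_subset hω : T n ω ∈ F)
  · rw [EReal.le_neg]
    refine EReal.ge_of_forall_gt_iff_ge.1 fun a ha => ?_
    obtain ⟨b, hab, hb⟩ := EReal.lt_iff_exists_real_btwn.1 ha
    obtain ⟨N, hN⟩ := hupper _ isClosed_closure b fun t ht => hb.trans_le (iInf₂_le t ht)
    have hab : 0 < b - a := sub_pos.2 (EReal.coe_lt_coe_iff.1 hab)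
    have hlarge : ∀ᶠ n : ℕ in atTop, (N : ℝ) ≤ Real.exp (n * (b - a)) :=
      (Real.tendsto_exp_atTop.comp
        (tendsto_natCast_atTop_atTop.atTop_mul_const hab)).eventually_ge_atTop _
    rw [EReal.le_neg]
    refine limsup_le_of_le (by isBoundedDefault) ?_
    filter_upwards [hN, hlarge, eventually_ne_atTop 0] with n hn hNn hn0
    rw [← inv_mul_log_ofReal_exp_neg hn0]
    refine monotone_inv_mul_log n ((ENNReal.le_ofReal_iff_toReal_le (measure_ne_top _ _)
      (Real.exp_pos _).le).2 ?_)
    calc (P n).real {ω | T n ω ∈ F} ≤ (P n).real {ω | T n ω ∈ closure F} :=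
          measureReal_mono (fun ω (hω : T n ω ∈ F) => subset_closure hω) (measure_ne_top _ _)
      _ ≤ N * Real.exp (-(n * b)) := hn
      _ ≤ Real.exp (n * (b - a)) * Real.exp (-(n * b)) := by gcongr
      _ = Real.exp (-(n * a)) := by rw [← Real.exp_add]; ring_nf

namespace SoftColoring

variable {Ω κ : Type*} [MeasurableSpace Ω] {ρ : Measure Ω} [Fintype κ]
  {E : Type*} {Φ : SoftColoring ρ κ → E}

/-- The contraction along `Φ` of the entropy relative to the probability vector `m`. -/
noncomputable def rate (m : κ → ℝ) (Φ : SoftColoring ρ κ → E) (t : E) : ℝ≥0∞ :=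
  ⨅ f : {f : SoftColoring ρ κ // Φ f = t}, ENNReal.ofReal (f.1.entropy m)

theorem rate_apply_le (m : κ → ℝ) (Φ : SoftColoring ρ κ → E) (f : SoftColoring ρ κ) :
    rate m Φ (Φ f) ≤ ENNReal.ofReal (f.entropy m) :=
  iInf_le (fun g : {g : SoftColoring ρ κ // Φ g = Φ f} => ENNReal.ofReal (g.1.entropy m)) ⟨f, rfl⟩

section Goodness

variable {m : κ → ℝ} (hpos : ∀ r, 0 < m r) (hm : m ∈ stdSimplex ℝ κ)
include hpos hm

theorem coe_lt_rate_apply {a : ℝ} {f : SoftColoring ρ κ} (ha : (a : EReal) < rate m Φ (Φ f)) :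
    a < f.entropy m := by
  have h := ha.trans_le (EReal.coe_ennreal_le_coe_ennreal_iff.2 (rate_apply_le m Φ f))
  rw [EReal.coe_ennreal_ofReal, max_eq_left (entropy_nonneg hpos hm f)] at h
  exact EReal.coe_lt_coe_iff.1 h

theorem exists_entropy_lt_of_rate_lt {a : ℝ} {t : E} (ha : (rate m Φ t : EReal) < a) :
    ∃ f : SoftColoring ρ κ, Φ f = t ∧ f.entropy m < a := by
  have ha0 : 0 ≤ a := EReal.coe_nonneg.1 ((EReal.coe_ennreal_nonneg _).trans ha.le)
  rw [← max_eq_left ha0, ← EReal.coe_ennreal_ofReal, EReal.coe_ennreal_lt_coe_ennreal_iff, rate,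
    iInf_lt_iff] at ha
  obtain ⟨f, hf⟩ := ha
  exact ⟨f, f.2, (ENNReal.ofReal_lt_ofReal_iff_of_nonneg (entropy_nonneg hpos hm _)).1 hf⟩

variable [IsProbabilityMeasure ρ]

theorem isCompact_setOf_entropy_le (a : ℝ) :
    IsCompact {f : SoftColoring ρ κ | f.entropy m ≤ a} :=
  ((lowerSemicontinuous_entropy hpos hm).isClosed_preimage a).isCompact

theorem isCompact_setOf_rate_le [TopologicalSpace E] [T1Space E] (hΦ : Continuous Φ) {c : ℝ≥0∞}
    (hc : c ≠ ⊤) : IsCompact {t | rate m Φ t ≤ c} := by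
  suffices {t | rate m Φ t ≤ c} = Φ '' {f | f.entropy m ≤ c.toReal} by
    rw [this]
    exact (isCompact_setOf_entropy_le hpos hm _).image hΦ
  have hofReal : ∀ f : SoftColoring ρ κ,
      f.entropy m ≤ c.toReal ↔ ENNReal.ofReal (f.entropy m) ≤ c := fun f =>
    (ENNReal.ofReal_le_iff_le_toReal hc).symm
  refine Subset.antisymm (fun t ht => ?_) ?_
  · have hne : (Φ ⁻¹' {t}).Nonempty := by
      by_contra h
      have : IsEmpty {f // Φ f = t} := ⟨fun f => h ⟨f, f.2⟩⟩
      exact hc (top_le_iff.1 ((iInf_of_empty _).symm.trans_le ht))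
    obtain ⟨f, hft, hf⟩ := (lowerSemicontinuous_entropy hpos hm).lowerSemicontinuousOn
      (Φ ⁻¹' {t}) |>.exists_isMinOn hne (isClosed_singleton.preimage hΦ).isCompact
    refine ⟨f, (hofReal f).2 (le_trans (le_iInf fun g => ?_) ht), hft⟩
    exact ENNReal.ofReal_le_ofReal (hf g.2)
  · rintro _ ⟨f, hf, rfl⟩
    exact (rate_apply_le m Φ f).trans ((hofReal f).1 hf)

end Goodness

variable [IsProbabilityMeasure ρ] [DecidableEq κ] [MeasurableSpace κ] [DiscreteMeasurableSpace κ]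
  {μ : Measure κ} [IsProbabilityMeasure μ]

theorem satisfiesLDP [MetricSpace E] (hpos : ∀ r, 0 < μ.real {r}) (hΦ : Continuous Φ)
    {T : ∀ n, (Fin n → κ) → E} (hT : ∀ ε > 0, ∀ᶠ n : ℕ in atTop, ∃ (τ : Ω → Fin n)
      (hτ : IsEquipartition ρ τ), (∀ x, dist (T n x) (Φ (ofColors hτ.measurable x)) ≤ ε) ∧
        ∀ f, dist (Φ f) (Φ (f.average hτ)) ≤ ε) :
    SatisfiesLDP (fun n => Measure.pi fun _ : Fin n => μ) T (rate (fun r => μ.real {r}) Φ) := by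
  have hm := measureReal_singleton_mem_stdSimplex μ
  refine satisfiesLDP_of_forall_isOpen_of_forall_isClosed
    (fun c hc => isCompact_setOf_rate_le hpos hm hΦ hc) (fun U hU t htU a ha => ?_)
    fun C hC a ha => ?_
  · obtain ⟨f, rfl, hf⟩ := exists_entropy_lt_of_rate_lt hpos hm ha
    obtain ⟨ε, hε, hball⟩ := Metric.isOpen_iff.1 hU _ htU
    filter_upwards [hT (ε / 3) (by positivity),
      eventually_exp_neg_mul_le_measureReal hpos hΦ hf (ε := ε / 3) (by positivity)]
      with n ⟨τ, hτ, hTx, havg⟩ hlower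
    refine hlower τ hτ _ fun x hx => hball (Metric.mem_ball.2 ?_)
    linarith [hTx x, havg f, dist_triangle4_right (T n x) (Φ f) (Φ (ofColors hτ.measurable x))
      (Φ (f.average hτ))]
  · have hdisj : Disjoint (Φ '' {f | f.entropy (fun r => μ.real {r}) ≤ a}) C := by
      rw [Set.disjoint_left]
      rintro _ ⟨f, hf, rfl⟩ hfC
      exact (coe_lt_rate_apply hpos hm (ha _ hfC)).not_ge hf
    obtain ⟨δ, hδ, hdisjδ⟩ := hdisj.exists_cthickenings
      ((isCompact_setOf_entropy_le hpos hm a).image hΦ) hC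
    obtain ⟨N, hN⟩ := exists_measureReal_ofColors_mem_le hpos (a := a)
      (Metric.isClosed_cthickening.preimage hΦ : IsClosed (Φ ⁻¹' Metric.cthickening δ C))
      fun f hf => not_le.1 fun hfa => Set.disjoint_left.1 hdisjδ
        (Metric.self_subset_cthickening _ (mem_image_of_mem Φ hfa)) hf
    refine ⟨N, (hT δ hδ).mono fun n ⟨τ, hτ, hTx, _⟩ => ?_⟩
    refine (measureReal_mono (fun x hx => ?_) (measure_ne_top _ _)).trans (hN hτ)
    exact Metric.mem_cthickening_of_dist_le _ _ _ _ hx (dist_comm (T n x) _ ▸ hTx x)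

end SoftColoring

end LargeDeviations

/-! ### Monochromatic counts -/

section MonochromaticCounts

variable {Ω : Type*} [MeasurableSpace Ω] {ρ : Measure Ω} [IsProbabilityMeasure ρ]
  {c v : ℕ} {G : SimpleGraph (Fin v)} [DecidableRel G.Adj]

theorem abs_monoPhi_le_one (y : Fin v → Fin c) : |monoPhi c v y| ≤ 1 := by
  unfold monoPhi
  split_ifs <;> simp

theorem integrable_uncurry_comp {n : ℕ} {τ : Ω → Fin n} (hτ : Measurable τ)
    (Q : Fin n → Fin n → ℝ) :
    Integrable (Function.uncurry fun x y => Q (τ x) (τ y)) (ρ.prod ρ) :=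
  (Integrable.of_finite (f := Function.uncurry Q)).comp_measurable (hτ.prodMap hτ)

theorem satisfiesLDP_Ustat_monoPhi [MeasurableSpace.CountablyGenerated Ω] {μ : Measure (Fin c)}
    [IsProbabilityMeasure μ] (hpos : ∀ r, 0 < μ.real {r}) (hv : v ≠ 0)
    {Q : ∀ n : ℕ, Fin n → Fin n → ℝ} {W : Ω → Ω → ℝ} (hW : Measurable (Function.uncurry W))
    (hWi : Integrable (Function.uncurry W) (ρ.prod ρ)) {q : ℝ} (hq : 1 < q) {C : ℝ≥0}
    (h : ∀ δ > 0, ∀ᶠ n in atTop, ∃ τ : Ω → Fin n, IsEquipartition ρ τ ∧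
      eLpNorm (Function.uncurry fun x y => Q n (τ x) (τ y)) (ENNReal.ofReal q * G.maxDegree)
        (ρ.prod ρ) ≤ C ∧
      CutNormLE ρ (Function.uncurry fun x y => Q n (τ x) (τ y) - W x y) δ) :
    SatisfiesLDP (fun n => Measure.pi fun _ : Fin n => μ)
      (fun n x => Ustat G (monoPhi c v) n (Q n) x)
      (SoftColoring.rate (fun r => μ.real {r}) (monoDensity G W : SoftColoring ρ (Fin c) → ℝ)) := by
  have hq1 : 1 ≤ ENNReal.ofReal q := ENNReal.one_le_ofReal.2 hq.le
  have hWC : eLpNorm (Function.uncurry W) (ENNReal.ofReal q * G.maxDegree) (ρ.prod ρ) ≤ C := by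
    rcases Nat.eq_zero_or_pos G.maxDegree with hD | hD
    · simp [hD]
    refine eLpNorm_le_of_forall_cutNormLE hW hWi (one_le_mul hq1 (Nat.one_le_cast.2 hD))
      fun δ hδ => ?_
    obtain ⟨n, τ, hτ, hC, hcut⟩ := (h δ hδ).exists
    exact ⟨_, integrable_uncurry_comp hτ.measurable (Q n), hC, hcut⟩
  have hWD : eLpNorm (Function.uncurry W) G.maxDegree (ρ.prod ρ) ≠ ⊤ :=
    ((eLpNorm_le_eLpNorm_of_exponent_le (le_mul_of_one_le_left' hq1)
      hW.aestronglyMeasurable).trans_lt (hWC.trans_lt ENNReal.coe_lt_top)).ne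
  refine SoftColoring.satisfiesLDP hpos (continuous_monoDensity G hW hWD) fun ε hε => ?_
  obtain ⟨δ, hδ, hcount⟩ :=
    exists_cutNormLE_abs_monoDensity_sub_le G (Fin c) ρ hq C (half_pos hε)
  filter_upwards [h δ hδ, eventually_abs_Vstat_sub_Ustat_le G ρ hq C (half_pos hε)]
    with n ⟨τ, hτ, hC, hcut⟩ hVU
  have hclose := fun f : SoftColoring ρ (Fin c) => abs_le.1 <|
    hcount _ W (measurable_uncurry_comp hτ.measurable (Q n)) hW hC hWC hcut f
  refine ⟨τ, hτ, fun x => ?_, fun f => ?_⟩ <;> rw [Real.dist_eq, abs_le]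
  · have hx := hclose (.ofColors hτ.measurable x)
    rw [monoDensity_ofColors G hv hτ] at hx
    have hxU := abs_le.1 (hVU τ (Q n) hτ hC _ abs_monoPhi_le_one x)
    constructor <;> linarith
  · have hf := hclose f
    have havg := hclose (f.average hτ)
    rw [monoDensity_average G hτ] at havg
    constructor <;> linarith

end MonochromaticCounts

section StepKernel

variable {n : ℕ}

theorem ae_mem_Ioc_unif01 : ∀ᵐ u ∂unif01, u ∈ Ioc (0 : ℝ) 1 := by
  rw [unif01, ← Measure.restrict_congr_set Ioc_ae_eq_Icc]
  exact ae_restrict_mem measurableSet_Ioc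

/-- The index, starting from `0`, of the cell `(i / n, (i + 1) / n]` containing a point of
`(0, 1]`; junk outside `(0, 1]`. -/
noncomputable def cellIndex (n : ℕ) [NeZero n] (u : ℝ) : Fin n := Fin.ofNat n (⌈n * u⌉₊ - 1)

variable [NeZero n]

theorem measurable_cellIndex : Measurable (cellIndex n) :=
  (Measurable.of_discrete (f := fun k => Fin.ofNat n (k - 1))).comp
    (Nat.measurable_ceil.comp (measurable_const_mul (n : ℝ)))

theorem mem_Ioc_div_iff_cellIndex_eq {u : ℝ} (hu : u ∈ Ioc (0 : ℝ) 1) (i : Fin n) :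
    u ∈ Ioc ((i : ℝ) / n) ((i + 1) / n) ↔ cellIndex n u = i := by
  have hn : (0 : ℝ) < n := Nat.cast_pos.2 (NeZero.pos n)
  have hceil_pos : 0 < ⌈n * u⌉₊ := Nat.ceil_pos.2 (mul_pos hn hu.1)
  have hceil_le : ⌈n * u⌉₊ ≤ n := Nat.ceil_le.2 (mul_le_of_le_one_right hn.le hu.2)
  have hcell : (cellIndex n u : ℕ) = ⌈n * u⌉₊ - 1 := Nat.mod_eq_of_lt (by omega)
  rw [mem_Ioc, div_lt_iff₀' hn, le_div_iff₀' hn, ← Nat.lt_ceil, ← Nat.cast_add_one, ← Nat.ceil_le,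
    Fin.ext_iff, hcell]
  omega

theorem isEquipartition_cellIndex : IsEquipartition unif01 (cellIndex n) where
  measurable := measurable_cellIndex
  measureReal_preimage i := by
    have hn : (0 : ℝ) < n := Nat.cast_pos.2 (NeZero.pos n)
    have hcell : cellIndex n ⁻¹' {i} =ᵐ[unif01] Ioc ((i : ℝ) / n) ((i + 1) / n) := by
      filter_upwards [ae_mem_Ioc_unif01] with u hu
      exact propext (mem_Ioc_div_iff_cellIndex_eq hu i).symm
    have hsub : Ioc ((i : ℝ) / n) ((i + 1) / n) ⊆ Icc 0 1 := fun u hu =>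
      ⟨(by positivity : (0 : ℝ) ≤ i / n).trans hu.1.le, hu.2.trans <|
        (div_le_one hn).2 (by exact_mod_cast i.2)⟩
    rw [measureReal_congr hcell, unif01, measureReal_restrict_apply measurableSet_Ioc,
      inter_eq_self_of_subset_left hsub, Real.volume_real_Ioc_of_le (by gcongr; linarith)]
    ring

theorem uncurry_stepKernel_ae_eq (Q : Fin n → Fin n → ℝ) :
    Function.uncurry (stepKernel n Q) =ᵐ[unif01.prod unif01]
      Function.uncurry fun x y => Q (cellIndex n x) (cellIndex n y) := by
  filter_upwards [Measure.quasiMeasurePreserving_fst.ae ae_mem_Ioc_unif01,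
    Measure.quasiMeasurePreserving_snd.ae ae_mem_Ioc_unif01] with z hx hy
  simp only [Function.uncurry, stepKernel, mem_Ioc_div_iff_cellIndex_eq hx,
    mem_Ioc_div_iff_cellIndex_eq hy, ite_and, Finset.sum_ite_eq, Finset.mem_univ, if_true,
    Finset.sum_ite_irrel, Finset.sum_const_zero]

theorem exists_isEquipartition_of_weakCutDist_lt {Q : Fin n → Fin n → ℝ} {W : ℝ → ℝ → ℝ}
    (hWi : Integrable (Function.uncurry W) (unif01.prod unif01)) {δ : ℝ}
    (h : weakCutDist (stepKernel n Q) W < δ) :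
    ∃ τ : ℝ → Fin n, IsEquipartition unif01 τ ∧
      (∀ p, eLpNorm (Function.uncurry fun x y => Q (τ x) (τ y)) p (unif01.prod unif01) =
        kerNorm (stepKernel n Q) p) ∧
      CutNormLE unif01 (Function.uncurry fun x y => Q (τ x) (τ y) - W x y) δ := by
  have : Nonempty {σ : ℝ → ℝ // MPB σ} := ⟨⟨id, bijOn_id _, .id _⟩⟩
  obtain ⟨⟨σ, hMPB⟩, hcut⟩ := exists_lt_of_ciInf_lt h
  have hσ : MeasurePreserving σ unif01 unif01 := hMPB.2
  have hσσ := hσ.prod hσ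
  have hstep : (Function.uncurry fun x y => Q (cellIndex n (σ x)) (cellIndex n (σ y))) =ᵐ[
      unif01.prod unif01] fun z => stepKernel n Q (σ z.1) (σ z.2) :=
    hσσ.quasiMeasurePreserving.ae_eq_comp (uncurry_stepKernel_ae_eq Q).symm
  refine ⟨cellIndex n ∘ σ, isEquipartition_cellIndex.comp hσ, fun p => ?_, ?_⟩
  · rw [kerNorm, ← Function.uncurry_def, eLpNorm_congr_ae (uncurry_stepKernel_ae_eq Q),
      ← eLpNorm_comp_measurePreserving
        (measurable_uncurry_comp measurable_cellIndex Q).aestronglyMeasurable hσσ]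
    rfl
  · have hdiff := hstep.sub (EventuallyEq.refl _ (Function.uncurry W))
    have hint := ((integrable_uncurry_comp (measurable_cellIndex.comp hσ.measurable) Q).sub
      hWi).congr hdiff
    exact ((cutNormLE_cutDist hint).mono hcut.le).congr_ae hdiff.symm

end StepKernel

section UnitInterval

variable {c v : ℕ}

theorem ae_mem_Icc_unif01 : ∀ᵐ u ∂unif01, u ∈ Icc (0 : ℝ) 1 := ae_restrict_mem measurableSet_Icc

theorem SoftColoring.mem_Fc (f : SoftColoring unif01 (Fin c)) : ⇑f ∈ Fc c :=
  ⟨f.measurable_toFun, fun u _ r => ⟨f.nonneg r u, f.le_one r u⟩, fun u _ => f.sum_eq_one u⟩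

theorem exists_softColoring_eqOn_of_mem_Fc {f : ℝ → Fin c → ℝ} (hf : f ∈ Fc c) :
    ∃ g : SoftColoring unif01 (Fin c), EqOn f g (Icc 0 1) := by
  have hproj : Measurable fun u => (projIcc (0 : ℝ) 1 zero_le_one u : ℝ) :=
    (continuous_subtype_val.comp continuous_projIcc).measurable
  refine ⟨⟨fun u => f (projIcc 0 1 zero_le_one u), hf.1.comp hproj, fun u => ?_⟩, fun u hu => ?_⟩
  · have hu := (projIcc (0 : ℝ) 1 zero_le_one u).2
    exact ⟨fun r => (hf.2.1 _ hu r).1, hf.2.2 _ hu⟩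
  · exact congrArg (fun u : Icc (0 : ℝ) 1 => f u) (projIcc_of_mem _ hu).symm

theorem G2_congr (G : SimpleGraph (Fin v)) [DecidableRel G.Adj] (W : ℝ → ℝ → ℝ)
    {f g : ℝ → Fin c → ℝ} (h : EqOn f g (Icc 0 1)) : G2 c G W f = G2 c G W g := by
  have hmem : ∀ᵐ x ∂Measure.pi fun _ : Fin v => unif01, ∀ a, x a ∈ Icc (0 : ℝ) 1 :=
    eventually_all.2 fun a => Measure.tendsto_eval_ae_ae.eventually ae_mem_Icc_unif01
  refine Finset.sum_congr rfl fun r _ => integral_congr_ae ?_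
  filter_upwards [hmem] with x hx
  simp only [fun a => h (hx a)]

theorem entPotts_congr (μ : Measure (Fin c)) {f g : ℝ → Fin c → ℝ} (h : EqOn f g (Icc 0 1)) :
    entPotts c μ f = entPotts c μ g := by
  refine integral_congr_ae ?_
  filter_upwards [ae_mem_Icc_unif01] with u hu
  simp only [h hu]

theorem G2_eq_monoDensity (G : SimpleGraph (Fin v)) [DecidableRel G.Adj] (W : ℝ → ℝ → ℝ)
    (f : SoftColoring unif01 (Fin c)) : G2 c G W f = monoDensity G W f := by
  simp only [G2, edgeProd_eq_prod, monoDensity, edgeIntegral]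

theorem rate2_eq_rate (G : SimpleGraph (Fin v)) [DecidableRel G.Adj] (W : ℝ → ℝ → ℝ)
    (μ : Measure (Fin c)) : rate2 c G W μ = SoftColoring.rate (fun r => μ.real {r})
      (monoDensity G W : SoftColoring unif01 (Fin c) → ℝ) := by
  refine funext fun t => le_antisymm (le_iInf fun f => ?_) (le_iInf fun f => ?_)
  · exact iInf_le_of_le ⟨f, f.1.mem_Fc, (G2_eq_monoDensity G W f.1).trans f.2⟩ le_rfl
  · obtain ⟨g, hg⟩ := exists_softColoring_eqOn_of_mem_Fc f.2.1
    rw [entPotts_congr μ hg]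
    exact iInf_le_of_le ⟨g, by rw [← G2_eq_monoDensity, ← G2_congr G W hg, f.2.2]⟩ le_rfl

end UnitInterval

theorem ldp_monochromatic_counts_general
    (c : ℕ) (μ : Measure (Fin c)) [IsProbabilityMeasure μ]
    (hpos : ∀ r : Fin c, 0 < μ {r})
    {v : ℕ} (hv : v ≠ 0) (G : SimpleGraph (Fin v)) [DecidableRel G.Adj]
    (Q : ∀ n : ℕ, Fin n → Fin n → ℝ)
    (W : ℝ → ℝ → ℝ) (hWmeas : Measurable (Function.uncurry W)) (hWL1 : kerNorm W 1 ≠ ⊤)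
    (hcut : Tendsto (fun n => weakCutDist (stepKernel n (Q n)) W) atTop (nhds 0))
    (q : ℝ≥0∞) (hq : 1 < q)
    (hnorm : Filter.atTop.limsup
        (fun n => kerNorm (stepKernel n (Q n)) (q * (G.maxDegree : ℝ≥0∞))) ≠ ⊤) :
    SatisfiesLDP (fun n => Measure.pi fun _ : Fin n => μ)
      (fun n x => Ustat G (monoPhi c v) n (Q n) x) (rate2 c G W μ) := by
  have hWi : Integrable (Function.uncurry W) (unif01.prod unif01) :=
    memLp_one_iff_integrable.1 ⟨hWmeas.aestronglyMeasurable, hWL1.lt_top⟩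
  obtain ⟨p, hp, hpq⟩ := ENNReal.lt_iff_exists_nnreal_btwn.1 hq
  obtain ⟨C, hC, -⟩ := ENNReal.lt_iff_exists_nnreal_btwn.1 hnorm.lt_top
  rw [rate2_eq_rate]
  refine satisfiesLDP_Ustat_monoPhi (fun r => ENNReal.toReal_pos (hpos r).ne' (measure_ne_top μ _))
    hv hWmeas hWi (q := p) (mod_cast hp) (C := C) fun δ hδ => ?_
  filter_upwards [eventually_lt_of_limsup_lt hC, hcut.eventually_lt_const hδ, eventually_ne_atTop 0]
    with n hnC hnδ hn
  have : NeZero n := ⟨hn⟩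
  obtain ⟨τ, hτ, hnormτ, hcutτ⟩ := exists_isEquipartition_of_weakCutDist_lt hWi hnδ
  refine ⟨τ, hτ, ?_, hcutτ⟩
  rw [ENNReal.ofReal_coe_nnreal]
  calc eLpNorm (Function.uncurry fun x y => Q n (τ x) (τ y)) (p * G.maxDegree) (unif01.prod unif01)
      ≤ eLpNorm (Function.uncurry fun x y => Q n (τ x) (τ y)) (q * G.maxDegree)
          (unif01.prod unif01) := eLpNorm_le_eLpNorm_of_exponent_le (by gcongr)
        (measurable_uncurry_comp hτ.measurable (Q n)).aestronglyMeasurable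
    _ ≤ C := (hnormτ _).trans_le hnC.le

/-- Corollary 1.3: LDP for monochromatic subgraph counts. -/
theorem ldp_monochromatic_counts
    (c : ℕ) (μ : Measure (Fin c)) [IsProbabilityMeasure μ]
    (hpos : ∀ r : Fin c, 0 < μ {r})
    {v : ℕ} (hv : 2 ≤ v) (G : SimpleGraph (Fin v)) [DecidableRel G.Adj]
    (Q : ∀ n : ℕ, Fin n → Fin n → ℝ)
    (hQsymm : ∀ n i j, Q n i j = Q n j i) (hQzero : ∀ n i, Q n i i = 0)
    (W : ℝ → ℝ → ℝ) (hWmeas : Measurable (Function.uncurry W))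
    (hWsymm : ∀ x y, W x y = W y x) (hWL1 : kerNorm W 1 ≠ ⊤)
    (hcut : Tendsto (fun n => weakCutDist (stepKernel n (Q n)) W) atTop (nhds 0))
    (q : ℝ≥0∞) (hq : 1 < q)
    (hnorm : Filter.atTop.limsup
        (fun n => kerNorm (stepKernel n (Q n)) (q * (G.maxDegree : ℝ≥0∞))) ≠ ⊤) :
    SatisfiesLDP (fun n => Measure.pi fun _ : Fin n => μ)
      (fun n x => Ustat G (monoPhi c v) n (Q n) x) (rate2 c G W μ) :=
  ldp_monochromatic_counts_general c μ hpos (by omega) G Q W hWmeas hWL1 hcut q hq hnorm
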